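/- arXiv:1704.04191 — 2 statements merged into one kernel-verified Lean document; each statement's English description precedes it below -/
import Mathlib

section
/- Let f : ℝⁿ → ℝⁿ be continuously differentiable, F : ℝᵐ ⇉ ℝᵐ a set-valued map with closed graph, B an injective n×m real matrix and C an m×n real matrix. Define Φ(z) = f(z) + B F(Cz), F_C(u) = F(u) if u = Cz for some z ∈ ℝⁿ and F_C(u) = ∅ otherwise. Let (z̄, p̄) ∈ gph Φ and set v̄ = (BᵀB)⁻¹Bᵀ(p̄ − f(z̄)). Then for every ξ ∈ ℝⁿ, D*Φ(z̄ | p̄)(ξ) = ∇f(z̄)ᵀ ξ + Cᵀ D*F_C(Cz̄ | v̄)(Bᵀ ξ). -/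
open Filter Topology Set Metric RealInnerProductSpace
open scoped ENNReal NNReal Pointwise

noncomputable section

/-- Graph of a set-valued map. -/
def svGraph {α β : Type*} (F : α → Set β) : Set (α × β) := {p | p.2 ∈ F p.1}

/-- Inverse of a set-valued map. -/
def svInv {α β : Type*} (F : α → Set β) : β → Set α := fun y => {x | y ∈ F x}

/-- Local closedness of a set at a point of a metric space. -/
def LocClosedAt {α : Type*} [PseudoMetricSpace α] (s : Set α) (p : α) : Prop :=
  ∃ r : ℝ, 0 < r ∧ IsClosed (s ∩ Metric.closedBall p r)

section Cones

variable {X : Type*} [NormedAddCommGroup X] [NormedSpace ℝ X]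

/-- Bouligand-Severi contingent cone. -/
def contingentCone (Ω : Set X) (x : X) : Set X :=
  { u | ∃ (t : ℕ → ℝ) (uk : ℕ → X), (∀ k, 0 < t k) ∧
      Tendsto t atTop (𝓝 0) ∧ Tendsto uk atTop (𝓝 u) ∧ ∀ k, x + t k • uk k ∈ Ω }

/-- Bouligand paratingent cone. -/
def paratingentCone (Ω : Set X) (x : X) : Set X :=
  { u | ∃ (t : ℕ → ℝ) (uk : ℕ → X) (xk : ℕ → X), (∀ k, 0 < t k) ∧
      Tendsto t atTop (𝓝 0) ∧ Tendsto uk atTop (𝓝 u) ∧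
      (∀ k, xk k ∈ Ω) ∧ Tendsto xk atTop (𝓝 x) ∧ ∀ k, xk k + t k • uk k ∈ Ω }

end Cones

section NormalCones

variable {X : Type*} [NormedAddCommGroup X] [InnerProductSpace ℝ X]

/-- Fréchet (regular) normal cone. -/
def frechetNormalCone (Ω : Set X) (x : X) : Set X :=
  { v | ∀ ε : ℝ, 0 < ε → ∃ δ : ℝ, 0 < δ ∧ ∀ y ∈ Ω, ‖y - x‖ < δ →
      ⟪v, y - x⟫ ≤ ε * ‖y - x‖ }

/-- Limiting (Mordukhovich) normal cone. -/
def limitingNormalCone (Ω : Set X) (x : X) : Set X :=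
  { v | ∃ (xk : ℕ → X) (vk : ℕ → X), (∀ k, xk k ∈ Ω) ∧
      Tendsto xk atTop (𝓝 x) ∧ Tendsto vk atTop (𝓝 v) ∧
      ∀ k, vk k ∈ frechetNormalCone Ω (xk k) }

end NormalCones

section Derivatives

variable {E F : Type*} [NormedAddCommGroup E] [NormedSpace ℝ E]
  [NormedAddCommGroup F] [NormedSpace ℝ F]

/-- Graphical derivative. -/
def gDeriv (Fm : E → Set F) (x : E) (y : F) : E → Set F := fun u =>
  {v | (u, v) ∈ contingentCone (svGraph Fm) (x, y)}

/-- Strict graphical derivative. -/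
def sgDeriv (Fm : E → Set F) (x : E) (y : F) : E → Set F := fun u =>
  {v | (u, v) ∈ paratingentCone (svGraph Fm) (x, y)}

end Derivatives

section Coderivative

variable {E F : Type*} [NormedAddCommGroup E] [InnerProductSpace ℝ E]
  [NormedAddCommGroup F] [InnerProductSpace ℝ F]

/-- Coderivative: `w ∈ D*F(x|y)(z)` iff `(w, -z)` is in the limiting normal cone
to the graph of `F` (viewed inside the `ℓ²` product) at `(x, y)`. -/
def coDeriv (Fm : E → Set F) (x : E) (y : F) : F → Set E := fun z =>
  { w | (WithLp.equiv 2 (E × F)).symm (w, -z) ∈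
      limitingNormalCone ((WithLp.equiv 2 (E × F)).symm '' svGraph Fm)
        ((WithLp.equiv 2 (E × F)).symm (x, y)) }

end Coderivative

section Norms

variable {E F : Type*} [NormedAddCommGroup E] [NormedAddCommGroup F]

/-- Outer norm of a (positively homogeneous) set-valued map. -/
def outerNormSV (H : E → Set F) : ℝ≥0∞ :=
  ⨆ (x : E) (_ : ‖x‖ ≤ 1) (y : F) (_ : y ∈ H x), (‖y‖₊ : ℝ≥0∞)

/-- Inner norm of a (positively homogeneous) set-valued map. -/
def innerNormSV (H : E → Set F) : ℝ≥0∞ :=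
  ⨆ (x : E) (_ : ‖x‖ ≤ 1), ⨅ (y : F) (_ : y ∈ H x), (‖y‖₊ : ℝ≥0∞)

/-- Positive homogeneity of a set-valued map. -/
def PosHomogeneous {E F : Type*} [NormedAddCommGroup E] [NormedSpace ℝ E]
    [NormedAddCommGroup F] [NormedSpace ℝ F] (H : E → Set F) : Prop :=
  (0 : F) ∈ H 0 ∧ ∀ (c : ℝ), 0 < c → ∀ x, H (c • x) = c • (H x)

end Norms

section Stability

variable {E F : Type*} [NormedAddCommGroup E] [NormedAddCommGroup F]

/-- Metric regularity with constant `κ`. -/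
def MetrRegWith (κ : ℝ≥0) (Fm : E → Set F) (xbar : E) (ybar : F) : Prop :=
  ∃ U ∈ 𝓝 xbar, ∃ V ∈ 𝓝 ybar, ∀ x ∈ U, ∀ y ∈ V,
    EMetric.infEdist x (svInv Fm y) ≤ (κ : ℝ≥0∞) * EMetric.infEdist y (Fm x)

/-- The regularity modulus `reg (F; xbar|ybar)`. -/
def regMod (Fm : E → Set F) (xbar : E) (ybar : F) : ℝ≥0∞ :=
  ⨅ (κ : ℝ≥0) (_ : MetrRegWith κ Fm xbar ybar), (κ : ℝ≥0∞)

/-- Aubin property with constant `κ`. -/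
def AubinWith (κ : ℝ≥0) (S : F → Set E) (ybar : F) (xbar : E) : Prop :=
  ∃ V ∈ 𝓝 ybar, ∃ U ∈ 𝓝 xbar, ∀ y ∈ V, ∀ y' ∈ V, ∀ x ∈ S y' ∩ U,
    ∃ x' ∈ S y, ‖x - x'‖ ≤ (κ : ℝ) * ‖y - y'‖

/-- The Lipschitz modulus `lip (S; ybar|xbar)`. -/
def lipMod (S : F → Set E) (ybar : F) (xbar : E) : ℝ≥0∞ :=
  ⨅ (κ : ℝ≥0) (_ : AubinWith κ S ybar xbar), (κ : ℝ≥0∞)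

/-- Strong metric subregularity with constant `κ`. -/
def SubregWith (κ : ℝ≥0) (Fm : E → Set F) (xbar : E) (ybar : F) : Prop :=
  ∃ U ∈ 𝓝 xbar, ∀ x ∈ U, (‖x - xbar‖₊ : ℝ≥0∞) ≤ (κ : ℝ≥0∞) * EMetric.infEdist ybar (Fm x)

/-- The subregularity modulus `subreg (F; xbar|ybar)`. -/
def subregMod (Fm : E → Set F) (xbar : E) (ybar : F) : ℝ≥0∞ :=
  ⨅ (κ : ℝ≥0) (_ : SubregWith κ Fm xbar ybar), (κ : ℝ≥0∞)

/-- Isolated calmness with constant `κ`. -/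
def CalmWith (κ : ℝ≥0) (S : F → Set E) (ybar : F) (xbar : E) : Prop :=
  ∃ V ∈ 𝓝 ybar, ∃ U ∈ 𝓝 xbar, ∀ y ∈ V, ∀ x ∈ S y ∩ U, ‖x - xbar‖ ≤ (κ : ℝ) * ‖y - ybar‖

/-- The calmness modulus `clm (S; ybar|xbar)`. -/
def clmMod (S : F → Set E) (ybar : F) (xbar : E) : ℝ≥0∞ :=
  ⨅ (κ : ℝ≥0) (_ : CalmWith κ S ybar xbar), (κ : ℝ≥0∞)

/-- Strong metric regularity: metric regularity plus a single-valued localization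
of the inverse. -/
def StrongMetrReg (Fm : E → Set F) (xbar : E) (ybar : F) : Prop :=
  (∃ κ : ℝ≥0, MetrRegWith κ Fm xbar ybar) ∧
  ∃ U ∈ 𝓝 xbar, ∃ V ∈ 𝓝 ybar, ∀ y ∈ V, (svInv Fm y ∩ U).Subsingleton

end Stability

/-!
The graph of the limiting coderivative is the closure of the graph of the Fréchet coderivative, so a
rule for Fréchet coderivatives that is implemented by a continuous map passes to limits. With
`Φ = f + B ∘ F ∘ C` this leaves three Fréchet rules.

* Adding `f`: only the inclusion `⊇` needs a proof, since `⊆` is `⊇` applied to `-f`.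
* Composing on the left with `B`, which has a left inverse `L`: a dual vector `η` near `Bᵀ z` lifts
  to the vector `z + Lᵀ (η - Bᵀ z)` near `z`.
* Composing on the right with `C`, which has a generalized inverse `S` (`C S C = C`): a point `u` of
  `range C` near `C x` lifts to the point `x + S (u - C x)` near `x`. A vector `w` in a Fréchet
  coderivative of `F ∘ C` is orthogonal to `ker C`, because the graph of `F ∘ C` contains the
  translates along `ker C` of each of its points; hence `w = Cᵀ Sᵀ w`.
-/

section GeneralizedInverse

theorem exists_generalizedInverse {R V W : Type*} [DivisionRing R] [AddCommGroup V] [Module R V]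
    [AddCommGroup W] [Module R W] (A : V →ₗ[R] W) : ∃ S : W →ₗ[R] V, ∀ x, A (S (A x)) = A x := by
  obtain ⟨g, hg⟩ := A.rangeRestrict.exists_rightInverse_of_surjective A.range_rangeRestrict
  obtain ⟨S, hS⟩ := g.exists_extend
  refine ⟨S, fun x => ?_⟩
  have hSg : S (A x) = g (A.rangeRestrict x) := LinearMap.congr_fun hS (A.rangeRestrict x)
  rw [hSg]
  exact congrArg Subtype.val (LinearMap.congr_fun hg (A.rangeRestrict x))

theorem map_add_generalizedInverse_sub {V W 𝓐 𝓢 : Type*} [AddCommGroup V] [AddCommGroup W]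
    [FunLike 𝓐 V W] [AddMonoidHomClass 𝓐 V W] [FunLike 𝓢 W V] [AddMonoidHomClass 𝓢 W V]
    {A : 𝓐} {S : 𝓢} (hS : ∀ x, A (S (A x)) = A x) {x : V} {u : W} (hu : u ∈ range A) :
    A (x + S (u - A x)) = u := by
  obtain ⟨x', rfl⟩ := hu
  rw [map_add, map_sub, map_sub, hS, hS, add_sub_cancel]

end GeneralizedInverse

section NormalConeLemmas

variable {X : Type*} [NormedAddCommGroup X] [InnerProductSpace ℝ X] {Ω : Set X} {x v : X}

theorem mem_frechetNormalCone_iff_isLittleO :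
    v ∈ frechetNormalCone Ω x ↔
      (fun y => max ⟪v, y - x⟫ 0) =o[𝓝[Ω] x] (fun y => y - x) := by
  simp only [frechetNormalCone, mem_ofPred_eq, Asymptotics.isLittleO_iff,
    eventually_nhdsWithin_iff, Metric.eventually_nhds_iff, dist_eq_norm, Real.norm_eq_abs]
  refine forall₂_congr fun ε hε => exists_congr fun δ => and_congr_right fun _ =>
    forall_congr' fun y => ?_
  rw [abs_of_nonneg (le_max_right _ _), max_le_iff, and_iff_left (by positivity), imp.swap]

theorem mem_limitingNormalCone_iff_mem_closure :
    v ∈ limitingNormalCone Ω x ↔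
      (x, v) ∈ closure {q : X × X | q.1 ∈ Ω ∧ q.2 ∈ frechetNormalCone Ω q.1} := by
  rw [mem_closure_iff_seq_limit]
  constructor
  · rintro ⟨xk, vk, hxk, hx, hv, hvk⟩
    exact ⟨fun k => (xk k, vk k), fun k => ⟨hxk k, hvk k⟩, hx.prodMk_nhds hv⟩
  · rintro ⟨q, hq, h⟩
    exact ⟨_, _, fun k => (hq k).1, h.fst_nhds, h.snd_nhds, fun k => (hq k).2⟩

end NormalConeLemmas

section FrechetCoderivative

variable {E F E' F' : Type*} [NormedAddCommGroup E] [InnerProductSpace ℝ E]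
  [NormedAddCommGroup F] [InnerProductSpace ℝ F] [NormedAddCommGroup E'] [InnerProductSpace ℝ E']
  [NormedAddCommGroup F'] [InnerProductSpace ℝ F']
  {M : E → Set F} {N : E' → Set F'} {x w : E} {y z : F}

/-- Fréchet (regular) coderivative: `coDeriv` with the Fréchet normal cone in place of the limiting
one. -/
def frechetCoDeriv (M : E → Set F) (x : E) (y : F) : F → Set E := fun z =>
  {w | WithLp.toLp 2 (w, -z) ∈
    frechetNormalCone (WithLp.toLp 2 '' svGraph M) (WithLp.toLp 2 (x, y))}

/-- Graph of the Fréchet coderivative, as a map of the base point and of the dual variable: the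
points `((x, y), (z, w))` with `y ∈ M x` and `w ∈ frechetCoDeriv M x y z`. Limiting coderivatives
are read off its closure. -/
def frechetCoDerivGraph (M : E → Set F) : Set ((E × F) × (F × E)) :=
  {q | q.1 ∈ svGraph M ∧ q.2.2 ∈ frechetCoDeriv M q.1.1 q.1.2 q.2.1}

theorem mem_frechetCoDeriv_iff_isLittleO :
    w ∈ frechetCoDeriv M x y z ↔
      (fun q : E × F => max (⟪w, q.1 - x⟫ - ⟪z, q.2 - y⟫) 0)
        =o[𝓝[svGraph M] (x, y)] (fun q => q - (x, y)) := by
  let e := (WithLp.prodContinuousLinearEquiv 2 ℝ E F).symm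
  have hnorm : (fun q => e q - e (x, y)) =Θ[𝓝[svGraph M] (x, y)] (fun q => q - (x, y)) := by
    simpa only [map_sub] using ⟨e.isBigO_sub _ (x, y), e.isBigO_sub_rev _ (x, y)⟩
  have hmap : 𝓝[WithLp.toLp 2 '' svGraph M] (WithLp.toLp 2 (x, y)) =
      map e (𝓝[svGraph M] (x, y)) :=
    (e.toHomeomorph.isEmbedding.map_nhdsWithin_eq (svGraph M) (x, y)).symm
  rw [← hnorm.isLittleO_congr_right, frechetCoDeriv, mem_ofPred_eq,
    mem_frechetNormalCone_iff_isLittleO, hmap, Asymptotics.isLittleO_map]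
  simp [Function.comp_def, WithLp.prod_inner_apply, e, ← sub_eq_add_neg]

theorem mem_coDeriv_iff_mem_closure :
    w ∈ coDeriv M x y z ↔ ((x, y), (z, w)) ∈ closure (frechetCoDerivGraph M) := by
  rw [coDeriv, mem_ofPred_eq, mem_limitingNormalCone_iff_mem_closure]
  constructor <;> intro h
  · have hmaps : MapsTo (fun r : WithLp 2 (E × F) × WithLp 2 (E × F) =>
        (r.1.ofLp, (-r.2.snd, r.2.fst)))
        {r | r.1 ∈ WithLp.toLp 2 '' svGraph M ∧
          r.2 ∈ frechetNormalCone (WithLp.toLp 2 '' svGraph M) r.1} (frechetCoDerivGraph M) := by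
      rintro ⟨_, v⟩ ⟨⟨q, hq, rfl⟩, hv⟩
      exact ⟨hq, (congrArg (fun b => WithLp.toLp 2 (v.fst, b) ∈ _) (neg_neg v.snd)).mpr hv⟩
    simpa using map_mem_closure (by fun_prop) h hmaps
  · exact map_mem_closure (f := fun q : (E × F) × (F × E) =>
      (WithLp.toLp 2 q.1, WithLp.toLp 2 (q.2.2, -q.2.1))) (by fun_prop) h
      fun q hq => ⟨mem_image_of_mem _ hq.1, hq.2⟩

theorem mem_frechetCoDeriv_of_mapsTo {φ : E × F → E' × F'} {x' w' : E'} {y' z' : F'}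
    (hφ : MapsTo φ (svGraph M) (svGraph N)) (hφx : φ (x, y) = (x', y'))
    (hd : DifferentiableWithinAt ℝ φ (svGraph M) (x, y))
    (hpair : (fun q : E × F => (⟪w, q.1 - x⟫ - ⟪z, q.2 - y⟫) -
      (⟪w', (φ q).1 - x'⟫ - ⟪z', (φ q).2 - y'⟫)) =o[𝓝[svGraph M] (x, y)] (fun q => q - (x, y)))
    (hw' : w' ∈ frechetCoDeriv N x' y' z') : w ∈ frechetCoDeriv M x y z := by
  rw [mem_frechetCoDeriv_iff_isLittleO] at hw' ⊢
  have hlim : Tendsto φ (𝓝[svGraph M] (x, y)) (𝓝[svGraph N] (x', y')) :=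
    hφx ▸ hd.continuousWithinAt.tendsto_nhdsWithin hφ
  have hpull := (hw'.comp_tendsto hlim).trans_isBigO (hφx ▸ hd.isBigO_sub)
  refine (Asymptotics.IsBigO.of_norm_le fun q => ?_).trans_isLittleO
    (hpull.norm_left.add hpair.norm_left)
  simp only [Function.comp_apply, Real.norm_eq_abs]
  rw [abs_of_nonneg (le_max_right _ _), abs_of_nonneg (le_max_right _ _)]
  refine max_le ?_ (by positivity)
  linarith [le_max_left (⟪w', (φ q).1 - x'⟫ - ⟪z', (φ q).2 - y'⟫) 0,
    le_abs_self ((⟪w, q.1 - x⟫ - ⟪z, q.2 - y⟫) - (⟪w', (φ q).1 - x'⟫ - ⟪z', (φ q).2 - y'⟫))]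

theorem mem_frechetCoDeriv_of_mapsTo_of_eqOn {φ : E × F → E' × F'} {x' w' : E'} {y' z' : F'}
    (hφ : MapsTo φ (svGraph M) (svGraph N)) (hφx : φ (x, y) = (x', y'))
    (hd : DifferentiableWithinAt ℝ φ (svGraph M) (x, y))
    (hpair : EqOn (fun q => ⟪w, q.1 - x⟫ - ⟪z, q.2 - y⟫)
      (fun q => ⟪w', (φ q).1 - x'⟫ - ⟪z', (φ q).2 - y'⟫) (svGraph M))
    (hw' : w' ∈ frechetCoDeriv N x' y' z') : w ∈ frechetCoDeriv M x y z :=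
  mem_frechetCoDeriv_of_mapsTo hφ hφx hd
    ((Asymptotics.isLittleO_zero _ _).congr'
      (eventually_nhdsWithin_of_forall fun _ hq => (sub_eq_zero.2 (hpair hq)).symm) .rfl) hw'

theorem inner_le_inner_of_mem_gDeriv {h : E} {k : F} (hw : w ∈ frechetCoDeriv M x y z)
    (hk : k ∈ gDeriv M x y h) : ⟪w, h⟫ ≤ ⟪z, k⟫ := by
  obtain ⟨t, d, ht, ht0, hd, hmem⟩ := hk
  rw [mem_frechetCoDeriv_iff_isLittleO] at hw
  have hpath : Tendsto (fun n => (x, y) + t n • d n) atTop (𝓝[svGraph M] (x, y)) :=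
    tendsto_nhdsWithin_iff.2
      ⟨by simpa using (ht0.smul hd).const_add (x, y), .of_forall hmem⟩
  have hsmall : (fun n => t n * max (⟪w, (d n).1⟫ - ⟪z, (d n).2⟫) 0) =o[atTop] t := by
    have hbdd : (fun n => t n • d n) =O[atTop] t := by
      simpa using (Asymptotics.isBigO_refl t atTop).smul (hd.isBigO_one ℝ)
    have hlittle := (hw.comp_tendsto hpath).trans_isBigO
      (by simpa [Function.comp_def] using hbdd)
    refine hlittle.congr_left fun n => ?_
    simp [inner_smul_right, mul_max_of_nonneg _ _ (ht n).le, mul_sub]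
  have hzero : Tendsto (fun n => max (⟪w, (d n).1⟫ - ⟪z, (d n).2⟫) 0) atTop (𝓝 0) := by
    simpa [(ht _).ne'] using hsmall.tendsto_div_nhds_zero
  have hpos : Tendsto (fun n => max (⟪w, (d n).1⟫ - ⟪z, (d n).2⟫) 0) atTop
      (𝓝 (max (⟪w, h⟫ - ⟪z, k⟫) 0)) :=
    ((tendsto_const_nhds.inner hd.fst_nhds).sub (tendsto_const_nhds.inner hd.snd_nhds)).max
      tendsto_const_nhds
  exact sub_nonpos.1 (max_eq_right_iff.1 (tendsto_nhds_unique hpos hzero))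

end FrechetCoderivative

section CalculusRules

variable {E F G : Type*} [NormedAddCommGroup E] [InnerProductSpace ℝ E]
  [NormedAddCommGroup F] [InnerProductSpace ℝ F] [NormedAddCommGroup G] [InnerProductSpace ℝ G]

theorem adjoint_add_mem_frechetCoDeriv_vadd [CompleteSpace E] [CompleteSpace F] {f : E → F}
    {M : E → Set F} {x w : E} {y z : F} (hf : DifferentiableAt ℝ f x)
    (hw : w ∈ frechetCoDeriv M x y z) :
    (fderiv ℝ f x).adjoint z + w ∈ frechetCoDeriv (fun u => f u +ᵥ M u) x (f x + y) z := by
  have hf' : DifferentiableAt ℝ (fun q : E × F => f q.1) (x, f x + y) :=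
    DifferentiableAt.comp _ hf differentiableAt_fst
  refine mem_frechetCoDeriv_of_mapsTo (φ := fun q => (q.1, q.2 - f q.1)) ?_ (by simp)
    (differentiableAt_fst.prodMk (differentiableAt_snd.sub hf')).differentiableWithinAt ?_ hw
  · rintro ⟨u, p⟩ ⟨v, hv, rfl : f u + v = p⟩
    simpa [svGraph] using hv
  · have hlin : (fun q : E × F => f q.1 - f x - fderiv ℝ f x (q.1 - x))
        =o[𝓝[svGraph fun u => f u +ᵥ M u] (x, f x + y)] (fun q => q - (x, f x + y)) :=
      ((hf.hasFDerivAt.isLittleO.comp_tendsto (continuous_fst.tendsto (x, f x + y))).trans_isBigO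
        (Asymptotics.isBigO_of_le _ fun q => norm_fst_le (q - (x, f x + y)))).mono
          nhdsWithin_le_nhds
    refine ((innerSL ℝ (-z)).isBigO_comp _ _).trans_isLittleO hlin |>.congr_left fun q => ?_
    simp only [innerSL_apply_apply, inner_neg_left, inner_add_left, inner_sub_right,
      inner_add_right, map_sub, ContinuousLinearMap.adjoint_inner_left]
    ring

theorem adjoint_add_mem_coDeriv_vadd [CompleteSpace E] [CompleteSpace F] {f : E → F}
    {M : E → Set F} {x w : E} {y z : F} (hf : ContDiffAt ℝ 1 f x) (hw : w ∈ coDeriv M x y z) :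
    (fderiv ℝ f x).adjoint z + w ∈ coDeriv (fun u => f u +ᵥ M u) x (f x + y) z := by
  rw [mem_coDeriv_iff_mem_closure, mem_closure_iff_frequently] at hw ⊢
  have hdiff : ∀ᶠ q : (E × F) × (F × E) in 𝓝 ((x, y), (z, w)), DifferentiableAt ℝ f q.1.1 :=
    (continuous_fst.fst.tendsto ((x, y), (z, w))).eventually
      ((hf.eventually (by simp)).mono fun u hu => hu.differentiableAt one_ne_zero)
  have hcont : ContinuousAt (fun q : (E × F) × (F × E) =>
      ((q.1.1, f q.1.1 + q.1.2), (q.2.1, (fderiv ℝ f q.1.1).adjoint q.2.1 + q.2.2)))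
      ((x, y), (z, w)) := by
    have hf0 : ContinuousAt (fun q : (E × F) × (F × E) => f q.1.1) ((x, y), (z, w)) :=
      ContinuousAt.comp (f := fun q : (E × F) × (F × E) => q.1.1) hf.continuousAt (by fun_prop)
    have hf1 : ContinuousAt (fun q : (E × F) × (F × E) => (fderiv ℝ f q.1.1).adjoint)
        ((x, y), (z, w)) :=
      ContinuousLinearMap.adjoint.continuous.continuousAt.comp
        (ContinuousAt.comp (f := fun q : (E × F) × (F × E) => q.1.1)
          (hf.continuousAt_fderiv one_ne_zero) (by fun_prop))
    exact .prodMk (.prodMk (by fun_prop) (hf0.add (by fun_prop)))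
      (.prodMk (by fun_prop) ((hf1.clm_apply (by fun_prop)).add (by fun_prop)))
  refine hcont.tendsto.frequently (hw.mp (hdiff.mono fun q hq hmem => ?_))
  exact ⟨vadd_mem_vadd_set hmem.1, adjoint_add_mem_frechetCoDeriv_vadd hq hmem.2⟩

theorem coDeriv_vadd [CompleteSpace E] [CompleteSpace F] {f : E → F} {x : E}
    (hf : ContDiffAt ℝ 1 f x) (M : E → Set F) (y z : F) :
    coDeriv (fun u => f u +ᵥ M u) x (f x + y) z =
      (fderiv ℝ f x).adjoint z +ᵥ coDeriv M x y z := by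
  ext w
  rw [mem_vadd_set_iff_neg_vadd_mem]
  refine ⟨fun hw => ?_, fun hw => ?_⟩
  · simpa [fderiv_fun_neg, vadd_vadd] using adjoint_add_mem_coDeriv_vadd hf.neg hw
  · simpa using adjoint_add_mem_coDeriv_vadd hf hw

theorem mem_frechetCoDeriv_image_iff [CompleteSpace F] [CompleteSpace G] {B : F →L[ℝ] G}
    {L : G →L[ℝ] F} (hL : Function.LeftInverse L B) {M : E → Set F} {x w : E} {y : F} {z : G} :
    w ∈ frechetCoDeriv (fun u => B '' M u) x (B y) z ↔
      w ∈ frechetCoDeriv M x y (B.adjoint z) := by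
  constructor
  · refine mem_frechetCoDeriv_of_mapsTo_of_eqOn (φ := fun q => (q.1, B q.2))
      (fun q hq => mem_image_of_mem B hq) rfl (by fun_prop) fun q _ => ?_
    simp [ContinuousLinearMap.adjoint_inner_left]
  · refine mem_frechetCoDeriv_of_mapsTo_of_eqOn (φ := fun q => (q.1, L q.2)) ?_ (by simp [hL y])
      (by fun_prop) ?_
    · rintro ⟨u, _⟩ ⟨v, hv, rfl⟩
      simpa [svGraph, hL v] using hv
    · rintro ⟨u, _⟩ ⟨v, -, rfl⟩
      simp [ContinuousLinearMap.adjoint_inner_left, hL v]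

theorem coDeriv_image [CompleteSpace F] [CompleteSpace G] {B : F →L[ℝ] G} {L : G →L[ℝ] F}
    (hL : Function.LeftInverse L B) (M : E → Set F) (x : E) (y : F) (z : G) :
    coDeriv (fun u => B '' M u) x (B y) z = coDeriv M x y (B.adjoint z) := by
  have hadj : ∀ v, B.adjoint (L.adjoint v) = v := fun v =>
    ext_inner_right ℝ fun u => by simp [ContinuousLinearMap.adjoint_inner_left, hL u]
  ext w
  simp only [mem_coDeriv_iff_mem_closure]
  constructor <;> intro hw
  · have hmaps : MapsTo (fun q : (E × G) × (G × E) => ((q.1.1, L q.1.2), (B.adjoint q.2.1, q.2.2)))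
        (frechetCoDerivGraph fun u => B '' M u) (frechetCoDerivGraph M) := by
      rintro ⟨⟨u, _⟩, ζ, w⟩ ⟨⟨v, hv, rfl⟩, hw⟩
      exact ⟨by simpa [svGraph, hL v] using hv,
        by simpa [hL v] using (mem_frechetCoDeriv_image_iff hL).1 hw⟩
    simpa [hL y] using map_mem_closure (by fun_prop) hw hmaps
  · have hmaps : MapsTo (fun q : (E × F) × (F × E) =>
        ((q.1.1, B q.1.2), (z + L.adjoint (q.2.1 - B.adjoint z), q.2.2)))
        (frechetCoDerivGraph M) (frechetCoDerivGraph fun u => B '' M u) := by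
      rintro ⟨⟨u, v⟩, η, w⟩ ⟨hv, hw⟩
      exact ⟨mem_image_of_mem B hv, (mem_frechetCoDeriv_image_iff hL).2 (by simpa [hadj] using hw)⟩
    simpa using map_mem_closure (by fun_prop) hw hmaps

theorem inner_eq_zero_of_mem_frechetCoDeriv_comp {M : F → Set G} {C : E →L[ℝ] F} {x w h : E}
    {y z : G} (hy : y ∈ M (C x)) (hw : w ∈ frechetCoDeriv (fun u => M (C u)) x y z)
    (hh : C h = 0) : ⟪w, h⟫ = 0 := by
  have hpolar : ∀ k : E, C k = 0 → ⟪w, k⟫ ≤ 0 := fun k hk => by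
    have hzero : (0 : G) ∈ gDeriv (fun u => M (C u)) x y k :=
      ⟨fun n => 1 / ((n : ℝ) + 1), fun _ => (k, 0), fun n => by positivity,
        tendsto_one_div_add_atTop_nhds_zero_nat, tendsto_const_nhds,
        fun n => by simpa [svGraph, hk] using hy⟩
    simpa using inner_le_inner_of_mem_gDeriv hw hzero
  exact le_antisymm (hpolar h hh) (by simpa using hpolar (-h) (by simp [hh]))

/-- Restriction of a set-valued map to a set `D`: it takes the value `∅` outside `D`. -/
def svRestrict {α β : Type*} (M : α → Set β) (D : Set α) : α → Set β :=
  fun u => {v | u ∈ D ∧ v ∈ M u}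

section Comp

variable [CompleteSpace E] [CompleteSpace F] {M : F → Set G} {C : E →L[ℝ] F} {S : F →L[ℝ] E}
  {x w : E} {u : F} {y z : G}

theorem adjoint_mem_frechetCoDeriv_comp
    (hu : u ∈ frechetCoDeriv (svRestrict M (range C)) (C x) y z) :
    C.adjoint u ∈ frechetCoDeriv (fun x => M (C x)) x y z := by
  refine mem_frechetCoDeriv_of_mapsTo_of_eqOn (φ := fun q => (C q.1, q.2))
    (fun q hq => ?_) rfl (by fun_prop) (fun q _ => ?_) hu
  · exact ⟨mem_range_self q.1, hq⟩
  · simp [ContinuousLinearMap.adjoint_inner_left]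

theorem adjoint_mem_frechetCoDeriv_svRestrict (hS : ∀ x, C (S (C x)) = C x)
    (hw : w ∈ frechetCoDeriv (fun x => M (C x)) x y z) :
    S.adjoint w ∈ frechetCoDeriv (svRestrict M (range C)) (C x) y z := by
  have hdiff : Differentiable ℝ fun q : F × G => (x + S (q.1 - C x), q.2) := by fun_prop
  refine mem_frechetCoDeriv_of_mapsTo_of_eqOn (φ := fun q => (x + S (q.1 - C x), q.2)) ?_ (by simp)
    hdiff.differentiableAt.differentiableWithinAt (fun q _ => ?_) hw
  · rintro ⟨a, v⟩ ⟨ha, hv⟩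
    have hlift : C (x + S (a - C x)) = a := map_add_generalizedInverse_sub hS ha
    simpa only [svGraph, mem_ofPred_eq, hlift] using hv
  · simp [ContinuousLinearMap.adjoint_inner_left]

theorem adjoint_adjoint_eq_of_mem_frechetCoDeriv_comp (hS : ∀ x, C (S (C x)) = C x)
    (hy : y ∈ M (C x)) (hw : w ∈ frechetCoDeriv (fun x => M (C x)) x y z) :
    C.adjoint (S.adjoint w) = w := by
  refine ext_inner_right ℝ fun h => ?_
  have hker : ⟪w, h - S (C h)⟫ = 0 :=
    inner_eq_zero_of_mem_frechetCoDeriv_comp hy hw (by simp [hS])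
  rw [inner_sub_right, sub_eq_zero] at hker
  simpa only [ContinuousLinearMap.adjoint_inner_left] using hker.symm

theorem adjoint_mem_coDeriv_svRestrict (hS : ∀ x, C (S (C x)) = C x)
    (hw : w ∈ coDeriv (fun x => M (C x)) x y z) :
    S.adjoint w ∈ coDeriv (svRestrict M (range C)) (C x) y z := by
  rw [mem_coDeriv_iff_mem_closure] at hw ⊢
  exact map_mem_closure (f := fun q : (E × G) × (G × E) =>
    ((C q.1.1, q.1.2), (q.2.1, S.adjoint q.2.2))) (by fun_prop) hw
    fun q hq => ⟨⟨mem_range_self _, hq.1⟩, adjoint_mem_frechetCoDeriv_svRestrict hS hq.2⟩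

theorem adjoint_adjoint_eq_of_mem_coDeriv_comp (hS : ∀ x, C (S (C x)) = C x)
    (hw : w ∈ coDeriv (fun x => M (C x)) x y z) : C.adjoint (S.adjoint w) = w := by
  rw [mem_coDeriv_iff_mem_closure] at hw
  have hfixed : MapsTo (fun q : (E × G) × (G × E) => q.2.2)
      (frechetCoDerivGraph fun x => M (C x)) {v | C.adjoint (S.adjoint v) = v} := by
    rintro ⟨⟨a, v⟩, ζ, b⟩ ⟨hv, hb⟩
    exact adjoint_adjoint_eq_of_mem_frechetCoDeriv_comp hS hv hb
  have hclosed : IsClosed {v | C.adjoint (S.adjoint v) = v} :=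
    isClosed_eq (by fun_prop) continuous_id
  simpa only [hclosed.closure_eq, mem_ofPred_eq] using map_mem_closure (by fun_prop) hw hfixed

theorem adjoint_mem_coDeriv_comp (hS : ∀ x, C (S (C x)) = C x)
    (hu : u ∈ coDeriv (svRestrict M (range C)) (C x) y z) :
    C.adjoint u ∈ coDeriv (fun x => M (C x)) x y z := by
  rw [mem_coDeriv_iff_mem_closure] at hu ⊢
  have hmaps : MapsTo (fun q : (F × G) × (G × F) =>
      ((x + S (q.1.1 - C x), q.1.2), (q.2.1, C.adjoint q.2.2)))
      (frechetCoDerivGraph (svRestrict M (range C))) (frechetCoDerivGraph fun x => M (C x)) := by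
    rintro ⟨⟨a, v⟩, ζ, b⟩ ⟨⟨ha, hv⟩, hb⟩
    have hlift : C (x + S (a - C x)) = a := map_add_generalizedInverse_sub hS ha
    exact ⟨by simpa only [svGraph, mem_ofPred_eq, hlift] using hv,
      adjoint_mem_frechetCoDeriv_comp (by simpa only [hlift] using hb)⟩
  simpa using map_mem_closure (by fun_prop) hu hmaps

theorem coDeriv_comp (hS : ∀ x, C (S (C x)) = C x) (M : F → Set G) (x : E) (y z : G) :
    coDeriv (fun x => M (C x)) x y z =
      C.adjoint '' coDeriv (svRestrict M (range C)) (C x) y z := by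
  refine Subset.antisymm (fun w hw => ?_) (image_subset_iff.2 fun u => adjoint_mem_coDeriv_comp hS)
  exact ⟨S.adjoint w, adjoint_mem_coDeriv_svRestrict hS hw,
    adjoint_adjoint_eq_of_mem_coDeriv_comp hS hw⟩

end Comp

theorem coDeriv_of_GE_sum_general {H : Type*} [NormedAddCommGroup H] [InnerProductSpace ℝ H]
    [CompleteSpace E] [CompleteSpace F] [CompleteSpace G] [CompleteSpace H] {f : E → H}
    {B : G →L[ℝ] H} {L : H →L[ℝ] G} {C : E →L[ℝ] F} {S : F →L[ℝ] E} {x : E}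
    (hf : ContDiffAt ℝ 1 f x) (hL : Function.LeftInverse L B) (hS : ∀ x, C (S (C x)) = C x)
    (M : F → Set G) (y : G) (z : H) :
    coDeriv (fun x => f x +ᵥ B '' M (C x)) x (f x + B y) z =
      (fderiv ℝ f x).adjoint z +ᵥ
        C.adjoint '' coDeriv (svRestrict M (range C)) (C x) y (B.adjoint z) := by
  rw [coDeriv_vadd hf, coDeriv_image hL (fun x => M (C x)), coDeriv_comp hS]

end CalculusRules

section Matrices

open scoped Matrix ComplexOrder

variable {𝕜 m n : Type*} [RCLike 𝕜] [Fintype m] [DecidableEq m] [Fintype n] [DecidableEq n]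

theorem adjoint_toContinuousLinearMap_toEuclideanLin (A : Matrix m n 𝕜) :
    (Matrix.toEuclideanLin A).toContinuousLinearMap.adjoint =
      (Matrix.toEuclideanLin Aᴴ).toContinuousLinearMap := by
  rw [← LinearMap.adjoint_toContinuousLinearMap, ← Matrix.toEuclideanLin_conjTranspose_eq_adjoint]

theorem leftInverse_toEuclideanLin_of_injective {A : Matrix m n 𝕜}
    (hA : Function.Injective (Matrix.toEuclideanLin A)) :
    Function.LeftInverse (Matrix.toEuclideanLin ((Aᴴ * A)⁻¹ * Aᴴ)) (Matrix.toEuclideanLin A) := by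
  have hinj : Function.Injective A.mulVec := fun v v' h =>
    WithLp.toLp_injective 2 (hA (congrArg (WithLp.toLp 2) h))
  have hdet : IsUnit (Aᴴ * A).det :=
    (Matrix.isUnit_iff_isUnit_det _).1 (Matrix.PosDef.conjTranspose_mul_self A hinj).isUnit
  intro v
  rw [← LinearMap.comp_apply, ← Matrix.toLpLin_mul_same, Matrix.mul_assoc,
    Matrix.nonsing_inv_mul _ hdet, Matrix.toLpLin_one, LinearMap.id_apply]

end Matrices

/-- Coderivative of the sum for the generalized equation `f(z) + B F(Cz) ∋ p`. -/
theorem coDeriv_of_GE_sum {n m : ℕ}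
    (f : EuclideanSpace ℝ (Fin n) → EuclideanSpace ℝ (Fin n)) (hf : ContDiff ℝ 1 f)
    (Fm : EuclideanSpace ℝ (Fin m) → Set (EuclideanSpace ℝ (Fin m)))
    (hFm : IsClosed (svGraph Fm))
    (B : Matrix (Fin n) (Fin m) ℝ) (hB : Function.Injective (Matrix.toEuclideanLin B))
    (C : Matrix (Fin m) (Fin n) ℝ)
    (Phi : EuclideanSpace ℝ (Fin n) → Set (EuclideanSpace ℝ (Fin n)))
    (hPhi : Phi = fun z =>
      {w | ∃ v ∈ Fm (Matrix.toEuclideanLin C z), w = f z + Matrix.toEuclideanLin B v})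
    (FC : EuclideanSpace ℝ (Fin m) → Set (EuclideanSpace ℝ (Fin m)))
    (hFC : FC = fun u => {v | (∃ z, Matrix.toEuclideanLin C z = u) ∧ v ∈ Fm u})
    (zbar pbar : EuclideanSpace ℝ (Fin n)) (hzp : pbar ∈ Phi zbar)
    (vbar : EuclideanSpace ℝ (Fin m))
    (hvbar : vbar = Matrix.toEuclideanLin ((B.transpose * B)⁻¹ * B.transpose) (pbar - f zbar))
    (ξ : EuclideanSpace ℝ (Fin n)) :
    coDeriv Phi zbar pbar ξ =
      (fun w => ContinuousLinearMap.adjoint (fderiv ℝ f zbar) ξ +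
          Matrix.toEuclideanLin C.transpose w) ''
        coDeriv FC (Matrix.toEuclideanLin C zbar) vbar (Matrix.toEuclideanLin B.transpose ξ) := by
  obtain ⟨S, hS⟩ := exists_generalizedInverse (Matrix.toEuclideanLin C)
  have hL : Function.LeftInverse (Matrix.toEuclideanLin ((B.transpose * B)⁻¹ * B.transpose))
      (Matrix.toEuclideanLin B) := leftInverse_toEuclideanLin_of_injective hB
  have hPhi' : Phi = fun z =>
      f z +ᵥ Matrix.toEuclideanLin B '' Fm (Matrix.toEuclideanLin C z) := by
    ext z w
    simp [hPhi, mem_vadd_set, eq_comm]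
  obtain ⟨v, -, rfl⟩ := hPhi ▸ hzp
  have hv : vbar = v := by
    rw [hvbar, add_sub_cancel_left]
    exact hL v
  subst hPhi' hFC hv
  simpa only [adjoint_toContinuousLinearMap_toEuclideanLin,
    Matrix.conjTranspose_eq_transpose_of_trivial, ← image_vadd, image_image]
    using! coDeriv_of_GE_sum_general hf.contDiffAt
      (B := (Matrix.toEuclideanLin B).toContinuousLinearMap)
      (C := (Matrix.toEuclideanLin C).toContinuousLinearMap)
      (L := (Matrix.toEuclideanLin ((B.transpose * B)⁻¹ * B.transpose)).toContinuousLinearMap)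
      (S := S.toContinuousLinearMap) hL hS Fm vbar ξ

end
end

section
/- Let f : ℝⁿ → ℝⁿ be continuously differentiable, F : ℝᵐ ⇉ ℝᵐ a set-valued map with closed graph, B an injective n×m real matrix and C an m×n real matrix. Define Φ(z) = f(z) + B F(Cz), the solution mapping S(p) = { z : p ∈ Φ(z) }, F_C(u) = F(u) if u = Cz for some z ∈ ℝⁿ and F_C(u) = ∅ otherwise. Let (z̄, p̄) ∈ gph Φ and set v̄ = (BᵀB)⁻¹Bᵀ(p̄ − f(z̄)). Then S has the Aubin property at p̄ for z̄ if and only if the implication [0 ∈ ∇f(z̄)ᵀ ξ + Cᵀ D*F_C(Cz̄ | v̄)(Bᵀ ξ) ⟹ ξ = 0] holds; moreover lip(S; p̄|z̄) = sup{ ‖ξ‖ : (∇f(z̄)ᵀ ξ + Cᵀ D*F_C(Cz̄ | v̄)(Bᵀ ξ)) ∩ 𝔹 ≠ ∅ }, where 𝔹 is the closed unit ball of ℝⁿ. -/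
open Filter Topology Set Metric RealInnerProductSpace
open scoped ENNReal NNReal Pointwise

noncomputable section

/-!
For any set-valued map `Φ` with locally closed graph, the Aubin property of `Φ⁻¹` is read off the
limiting normals `(w, -ξ)` to the graph. If `Φ⁻¹` is Aubin with constant `κ`, moving `p` in the
direction `d` can be followed inside the graph by a step of length at most `κ ‖d‖`; pairing such
steps with a Fréchet normal `(w, -ξ)` gives `‖ξ‖ ≤ κ ‖w‖`, which survives passage to the limit.
Conversely, if `Φ⁻¹` is not Aubin with constant `κ`, there are nearby `(a, v)` in the graph and `b`
with `a` further than `κ ‖v - b‖` from `Φ⁻¹ b`. For `κ' < κ`, a minimizer over the graph of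
`κ' ‖p - b‖` plus a smoothing of `‖z - a‖` then has `p ≠ b`, so that the objective is differentiable
there and minus its derivative is a Fréchet normal with `‖w‖ ≤ 1` and `‖ξ‖ = κ'`. Both conclusions
of Mordukhovich's criterion follow by compactness.

For `Φ z = f z + B F(C z)` the graph is the image of `(C × id)⁻¹ (gph F_C)` under the map
`(z, v) ↦ (z, f z + B v)`, whose left inverse is `(z, p) ↦ (z, L (p - f z))` with `L B = id`.
Limiting normals transform by the adjoint of the derivative under such an image, and by `(C × id)ᵀ`
under the preimage because `gph F_C` lies in the range of `C × id`; together these give the exact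
chain rule `D*Φ(z|p)(ξ) = ∇f(z)ᵀ ξ + Cᵀ D*F_C(C z|v)(Bᵀ ξ)`.
-/

section FrechetNormals

variable {X Y : Type*} [NormedAddCommGroup X] [NormedSpace ℝ X]
  [NormedAddCommGroup Y] [NormedSpace ℝ Y]

/-- Fréchet normals to `Ω` at `x` as elements of the dual space. In contrast to
`frechetNormalCone` this depends only on the topology of `X`, so that products need no `ℓ²` norm;
`x ∈ Ω` is not required. -/
def IsFrechetNormal (Ω : Set X) (x : X) (l : X →L[ℝ] ℝ) : Prop :=
  ∀ ε : ℝ, 0 < ε → ∀ᶠ y in 𝓝[Ω] x, l (y - x) ≤ ε * ‖y - x‖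

theorem IsFrechetNormal.smul {Ω : Set X} {x : X} {l : X →L[ℝ] ℝ} (hl : IsFrechetNormal Ω x l)
    {c : ℝ} (hc : 0 < c) : IsFrechetNormal Ω x (c • l) := by
  intro ε hε
  filter_upwards [hl (ε / c) (by positivity)] with y hy
  calc c * l (y - x) ≤ c * (ε / c * ‖y - x‖) := by gcongr
    _ = ε * ‖y - x‖ := by field_simp

theorem IsFrechetNormal.of_mapsTo {Ω₁ : Set X} {Ω₂ : Set Y} {x : X} {g : X → Y}
    {l₁ : X →L[ℝ] ℝ} {l₂ : Y →L[ℝ] ℝ} (hmaps : MapsTo g Ω₁ Ω₂)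
    (hg : (fun y => g y - g x) =O[𝓝 x] fun y => y - x)
    (hl : (fun y => l₁ (y - x) - l₂ (g y - g x)) =o[𝓝[Ω₁] x] fun y => y - x)
    (h : IsFrechetNormal Ω₂ (g x) l₂) : IsFrechetNormal Ω₁ x l₁ := by
  intro ε hε
  obtain ⟨c, hc, hgc⟩ := hg.exists_pos
  have hgx : ContinuousAt g x := by
    refine tendsto_sub_nhds_zero_iff.1 (hg.trans_tendsto ?_)
    exact tendsto_sub_nhds_zero_iff.2 tendsto_id
  have htend : Tendsto g (𝓝[Ω₁] x) (𝓝[Ω₂] (g x)) :=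
    hgx.continuousWithinAt.tendsto_nhdsWithin hmaps
  filter_upwards [htend.eventually (h (ε / 2 / c) (by positivity)), hl.def (half_pos hε),
    hgc.bound.filter_mono nhdsWithin_le_nhds] with y hnormal hdiff hlip
  have hscaled : ε / 2 / c * ‖g y - g x‖ ≤ ε / 2 * ‖y - x‖ := by
    calc ε / 2 / c * ‖g y - g x‖ ≤ ε / 2 / c * (c * ‖y - x‖) := by gcongr
      _ = ε / 2 * ‖y - x‖ := by field_simp
  linarith [(abs_le.1 hdiff).2]

theorem IsFrechetNormal.nonpos_of_frequently {Ω : Set X} {x : X} {l : X →L[ℝ] ℝ}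
    (hl : IsFrechetNormal Ω x l) {c M : ℝ}
    (h : ∃ᶠ t in 𝓝[>] (0 : ℝ), ∃ u, ‖u‖ ≤ M ∧ x + t • u ∈ Ω ∧ c ≤ l u) : c ≤ 0 := by
  refine le_of_forall_pos_le_add fun ε hε => ?_
  have hM : 0 < |M| + 1 := by positivity
  obtain ⟨δ, hδ, hball⟩ := Metric.nhdsWithin_basis_ball.eventually_iff.1
    (hl (ε / (|M| + 1)) (by positivity))
  have hsmall : ∀ᶠ t in 𝓝[>] (0 : ℝ), t < δ / (|M| + 1) :=
    (eventually_lt_nhds (by positivity)).filter_mono nhdsWithin_le_nhds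
  obtain ⟨t, ⟨u, hu, huΩ, hcu⟩, htδ, ht⟩ :=
    (h.and_eventually (hsmall.and self_mem_nhdsWithin)).exists
  replace ht : 0 < t := ht
  replace hu : ‖u‖ ≤ |M| + 1 := by linarith [le_abs_self M]
  have hnorm : ‖x + t • u - x‖ = t * ‖u‖ := by
    rw [add_sub_cancel_left, norm_smul, Real.norm_of_nonneg ht.le]
  have hnear : t * ‖u‖ < δ := by
    calc t * ‖u‖ ≤ t * (|M| + 1) := by gcongr
      _ < δ := (lt_div_iff₀ hM).1 htδ
  have hlu : t * l u ≤ t * (ε / (|M| + 1) * ‖u‖) := by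
    have := hball ⟨by rwa [mem_ball, dist_eq_norm, hnorm], huΩ⟩
    rw [hnorm, add_sub_cancel_left, map_smul, smul_eq_mul] at this
    linarith
  calc c ≤ l u := hcu
    _ ≤ ε / (|M| + 1) * ‖u‖ := le_of_mul_le_mul_left hlu ht
    _ ≤ ε / (|M| + 1) * (|M| + 1) := by gcongr
    _ = 0 + ε := by field_simp; ring

theorem isFrechetNormal_neg_of_isLocalMinOn {Ω : Set X} {x : X} {φ : X → ℝ} {l : X →L[ℝ] ℝ}
    (hmin : IsLocalMinOn φ Ω x) (hφ : HasFDerivAt φ l x) : IsFrechetNormal Ω x (-l) := by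
  intro ε hε
  filter_upwards [hmin, (hφ.isLittleO.def hε).filter_mono nhdsWithin_le_nhds] with y hy hdiff
  rw [neg_apply]
  linarith [(abs_le.1 hdiff).2, (abs_le.1 hdiff).1]

theorem isFrechetNormal_image_iff {Γ : Set X} {Ψ : X → Y} {Λ : Y → X} {x : X} {Ψ' : X →L[ℝ] Y}
    {l : Y →L[ℝ] ℝ} (hΛΨ : Function.LeftInverse Λ Ψ) (hΨ : HasFDerivAt Ψ Ψ' x)
    (hΛ : DifferentiableAt ℝ Λ (Ψ x)) :
    IsFrechetNormal (Ψ '' Γ) (Ψ x) l ↔ IsFrechetNormal Γ x (l.comp Ψ') := by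
  constructor
  · refine IsFrechetNormal.of_mapsTo (mapsTo_image Ψ Γ) hΨ.isBigO_sub ?_
    refine ((l.isBigO_comp _ _).trans_isLittleO hΨ.isLittleO).neg_left.mono nhdsWithin_le_nhds
      |>.congr_left fun y => ?_
    simp
  · intro h
    rw [← hΛΨ x] at h hΨ
    refine h.of_mapsTo (g := Λ) ?_ hΛ.isBigO_sub ?_
    · rintro _ ⟨y, hy, rfl⟩
      rwa [hΛΨ]
    have hlin : (fun y => Ψ (Λ y) - Ψ (Λ (Ψ x)) - Ψ' (Λ y - Λ (Ψ x))) =o[𝓝 (Ψ x)]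
        fun y => y - Ψ x :=
      (hΨ.isLittleO.comp_tendsto hΛ.continuousAt).trans_isBigO hΛ.isBigO_sub
    refine ((l.isBigO_comp _ _).trans_isLittleO (hlin.mono nhdsWithin_le_nhds)).congr' ?_ .rfl
    filter_upwards [self_mem_nhdsWithin]
    rintro _ ⟨y, -, rfl⟩
    simp [hΛΨ _]

variable {Ω : Set Y} {A : X →L[ℝ] Y} {P : Y →L[ℝ] X}

theorem IsFrechetNormal.comp_comp_eq_of_preimage (hAP : ∀ x, A (P (A x)) = A x) {x : X}
    (hx : A x ∈ Ω) {l : X →L[ℝ] ℝ} (hl : IsFrechetNormal (A ⁻¹' Ω) x l) :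
    (l.comp P).comp A = l := by
  have hker : ∀ d, A d = 0 → l d ≤ 0 := fun d hd =>
    hl.nonpos_of_frequently (M := ‖d‖) <| Frequently.of_forall fun t =>
      ⟨d, le_rfl, by simpa [hd] using hx, le_rfl⟩
  have hle : ∀ d, l d ≤ l (P (A d)) := fun d => by
    simpa using hker (d - P (A d)) (by simp [hAP])
  ext d
  exact le_antisymm (by simpa using hle (-d)) (hle d)

theorem map_add_apply_sub_of_mem_range (hAP : ∀ x, A (P (A x)) = A x) (x : X) {u : Y}
    (hu : u ∈ range A) : A (x + P (u - A x)) = u := by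
  obtain ⟨z, rfl⟩ := hu
  rw [map_add, ← map_sub, hAP, map_sub, add_sub_cancel]

theorem isFrechetNormal_preimage_comp_iff (hAP : ∀ x, A (P (A x)) = A x) (hΩ : Ω ⊆ range A)
    {x : X} {m : Y →L[ℝ] ℝ} :
    IsFrechetNormal (A ⁻¹' Ω) x (m.comp A) ↔ IsFrechetNormal Ω (A x) m := by
  constructor
  · intro h
    let g : Y → X := fun u => x + P (u - A x)
    have hgx : g (A x) = x := by simp [g]
    have hg : DifferentiableAt ℝ g (A x) :=
      (P.differentiableAt.comp _ (differentiableAt_id.sub_const (A x))).const_add x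
    have hAg : ∀ u ∈ Ω, A (g u) = u := fun u hu => map_add_apply_sub_of_mem_range hAP x (hΩ hu)
    rw [← hgx] at h
    refine h.of_mapsTo (fun u hu => by rwa [mem_preimage, hAg u hu]) hg.isBigO_sub ?_
    refine (Asymptotics.isLittleO_zero _ _).congr' ?_ .rfl
    filter_upwards [self_mem_nhdsWithin] with u hu
    simp [hgx, hAg u hu]
  · exact IsFrechetNormal.of_mapsTo (mapsTo_preimage A Ω) A.differentiableAt.isBigO_sub
      ((Asymptotics.isLittleO_zero _ _).congr_left fun y => by simp)

end FrechetNormals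

section LimitingNormals

variable {X Y : Type*} [NormedAddCommGroup X] [NormedSpace ℝ X]
  [NormedAddCommGroup Y] [NormedSpace ℝ Y]

/-- The graph of the Fréchet normal cone mapping of `Ω`, as a subset of `X × X*`. -/
def frechetNormalBundle (Ω : Set X) : Set (X × (X →L[ℝ] ℝ)) :=
  {p | p.1 ∈ Ω ∧ IsFrechetNormal Ω p.1 p.2}

/-- Limiting normals to `Ω` at `x` as elements of the dual space; the closure encodes the
sequences in the definition of `limitingNormalCone`. -/
def IsLimitingNormal (Ω : Set X) (x : X) (l : X →L[ℝ] ℝ) : Prop :=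
  (x, l) ∈ closure (frechetNormalBundle Ω)

theorem isClosed_setOf_isLimitingNormal (Ω : Set X) (x : X) :
    IsClosed {l | IsLimitingNormal Ω x l} :=
  isClosed_closure.preimage (by fun_prop : Continuous fun l : X →L[ℝ] ℝ => (x, l))

theorem IsLimitingNormal.map {Ω₁ : Set X} {Ω₂ : Set Y} {x : X} {l : X →L[ℝ] ℝ} {y : Y}
    {m : Y →L[ℝ] ℝ} (h : IsLimitingNormal Ω₁ x l)
    {g : X × (X →L[ℝ] ℝ) → Y × (Y →L[ℝ] ℝ)} (hg : ContinuousAt g (x, l)) (hgx : g (x, l) = (y, m))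
    (hmaps : ∀ᶠ p in 𝓝 (x, l), p ∈ frechetNormalBundle Ω₁ → g p ∈ frechetNormalBundle Ω₂) :
    IsLimitingNormal Ω₂ y m := by
  rw [IsLimitingNormal, mem_closure_iff_frequently] at h ⊢
  rw [ContinuousAt, hgx] at hg
  exact hg.frequently ((h.and_eventually hmaps).mono fun p hp => hp.2 hp.1)

theorem IsLimitingNormal.mem_of_isClosed {Ω : Set X} {x : X} {l : X →L[ℝ] ℝ}
    (h : IsLimitingNormal Ω x l) {K : Set (X →L[ℝ] ℝ)} (hK : IsClosed K)
    (hΩ : ∀ᶠ y in 𝓝 x, y ∈ Ω → ∀ l, IsFrechetNormal Ω y l → l ∈ K) : l ∈ K := by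
  rw [IsLimitingNormal, mem_closure_iff_frequently] at h
  refine hK.mem_of_frequently_of_tendsto ((h.and_eventually
    (continuousAt_fst.eventually hΩ)).mono fun p hp => ?_) (continuousAt_snd (p := (x, l)))
  exact hp.2 hp.1.1 _ hp.1.2

theorem IsLimitingNormal.smul {Ω : Set X} {x : X} {l : X →L[ℝ] ℝ} (h : IsLimitingNormal Ω x l)
    {c : ℝ} (hc : 0 < c) : IsLimitingNormal Ω x (c • l) :=
  h.map (g := fun p => (p.1, c • p.2)) (by fun_prop) rfl <|
    Eventually.of_forall fun _ hp => ⟨hp.1, hp.2.smul hc⟩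

theorem exists_isLimitingNormal_of_frequently {Ω : Set X} {x : X} {K : Set (X →L[ℝ] ℝ)}
    (hK : IsCompact K) (h : ∃ᶠ y in 𝓝 x, y ∈ Ω ∧ ∃ l ∈ K, IsFrechetNormal Ω y l) :
    ∃ l ∈ K, IsLimitingNormal Ω x l := by
  contrapose! h
  have hev : ∀ᶠ y in 𝓝 x, ∀ l ∈ K, (y, l) ∉ frechetNormalBundle Ω :=
    hK.eventually_forall_of_forall_eventually fun l hl => by
      simpa only [IsLimitingNormal, mem_closure_iff_frequently, not_frequently] using h l hl
  exact hev.mono fun y hy hyΩ l hl hn => hy l hl ⟨hyΩ, hn⟩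

theorem eventually_differentiableAt_and {Ψ : X → Y} {Λ : Y → X} {x : X}
    (hΨ : ContDiffAt ℝ 1 Ψ x) (hΛ : ContDiffAt ℝ 1 Λ (Ψ x)) :
    ∀ᶠ w in 𝓝 x, DifferentiableAt ℝ Ψ w ∧ DifferentiableAt ℝ Λ (Ψ w) :=
  ((hΨ.eventually (by simp)).and (hΨ.continuousAt.eventually (hΛ.eventually (by simp)))).mono
    fun _ hw => ⟨hw.1.differentiableAt one_ne_zero, hw.2.differentiableAt one_ne_zero⟩

theorem IsLimitingNormal.of_image {Γ : Set X} {Ψ : X → Y} {Λ : Y → X} {x : X} {l : Y →L[ℝ] ℝ}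
    (h : IsLimitingNormal (Ψ '' Γ) (Ψ x) l) (hΛΨ : Function.LeftInverse Λ Ψ)
    (hΨ : ContDiffAt ℝ 1 Ψ x) (hΛ : ContDiffAt ℝ 1 Λ (Ψ x)) :
    IsLimitingNormal Γ x (l.comp (fderiv ℝ Ψ x)) := by
  have hfst : ContinuousAt Prod.fst (Ψ x, l) := continuousAt_fst
  have hΛfst := hΛ.continuousAt.comp_of_eq hfst rfl
  have hΨ'fst := (hΨ.fderiv_right (m := 0) le_rfl).continuousAt.comp_of_eq hΛfst (hΛΨ x)
  have hΛx : Tendsto (Λ ∘ Prod.fst) (𝓝 (Ψ x, l)) (𝓝 x) := by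
    simpa only [ContinuousAt, Function.comp_apply, hΛΨ x] using hΛfst
  refine h.map (g := fun p => (Λ p.1, p.2.comp (fderiv ℝ Ψ (Λ p.1)))) ?_ (by simp [hΛΨ x]) ?_
  · exact hΛfst.prodMk (continuousAt_snd.clm_comp hΨ'fst)
  · filter_upwards [hΛx.eventually (eventually_differentiableAt_and hΨ hΛ)]
    rintro ⟨_, m⟩ hw ⟨⟨w, hwΓ, rfl⟩, hm⟩
    simp only [Function.comp_apply, hΛΨ w] at hw
    have := (isFrechetNormal_image_iff hΛΨ hw.1.hasFDerivAt hw.2).1 hm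
    simpa only [frechetNormalBundle, mem_ofPred_eq, hΛΨ w] using ⟨hwΓ, this⟩

theorem IsLimitingNormal.image {Γ : Set X} {Ψ : X → Y} {Λ : Y → X} {x : X} {l : Y →L[ℝ] ℝ}
    (h : IsLimitingNormal Γ x (l.comp (fderiv ℝ Ψ x))) (hΛΨ : Function.LeftInverse Λ Ψ)
    (hΨ : ContDiffAt ℝ 1 Ψ x) (hΛ : ContDiffAt ℝ 1 Λ (Ψ x)) :
    IsLimitingNormal (Ψ '' Γ) (Ψ x) l := by
  let Q : X → Y →L[ℝ] X := fun w => fderiv ℝ Λ (Ψ w)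
  have hfst : ContinuousAt Prod.fst (x, l.comp (fderiv ℝ Ψ x)) := continuousAt_fst
  have hΨfst := hΨ.continuousAt.comp_of_eq hfst rfl
  have hΨ'fst := (hΨ.fderiv_right (m := 0) le_rfl).continuousAt.comp_of_eq hfst rfl
  have hQfst := (hΛ.fderiv_right (m := 0) le_rfl).continuousAt.comp_of_eq hΨfst rfl
  -- The correction term makes the functional restrict exactly to `p.2` along `Ψ'`.
  refine h.map (g := fun p =>
    (Ψ p.1, p.2.comp (Q p.1) + l - (l.comp (fderiv ℝ Ψ p.1)).comp (Q p.1))) ?_ (by simp) ?_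
  · exact hΨfst.prodMk (((continuousAt_snd.clm_comp hQfst).add continuousAt_const).sub
      ((continuousAt_const.clm_comp hΨ'fst).clm_comp hQfst))
  · filter_upwards [hfst.eventually (eventually_differentiableAt_and hΨ hΛ)]
    rintro ⟨w, m⟩ ⟨hΨw, hΛw⟩ ⟨hwΓ, hm⟩
    have hQΨ : (Q w).comp (fderiv ℝ Ψ w) = .id ℝ X := by
      rw [← fderiv_comp w hΛw hΨw, hΛΨ.comp_eq_id, fderiv_id]
    refine ⟨mem_image_of_mem Ψ hwΓ,
      (isFrechetNormal_image_iff hΛΨ hΨw.hasFDerivAt hΛw).2 ?_⟩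
    convert hm using 1
    ext d
    have hd : Q w (fderiv ℝ Ψ w d) = d := DFunLike.congr_fun hQΨ d
    simp [hd]

theorem isLimitingNormal_image_iff {Γ : Set X} {Ψ : X → Y} {Λ : Y → X} {x : X} {l : Y →L[ℝ] ℝ}
    (hΛΨ : Function.LeftInverse Λ Ψ) (hΨ : ContDiffAt ℝ 1 Ψ x) (hΛ : ContDiffAt ℝ 1 Λ (Ψ x)) :
    IsLimitingNormal (Ψ '' Γ) (Ψ x) l ↔ IsLimitingNormal Γ x (l.comp (fderiv ℝ Ψ x)) :=
  ⟨fun h => h.of_image hΛΨ hΨ hΛ, fun h => h.image hΛΨ hΨ hΛ⟩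

variable {Ω : Set Y} {A : X →L[ℝ] Y} {P : Y →L[ℝ] X}

theorem isLimitingNormal_preimage_comp_iff (hAP : ∀ x, A (P (A x)) = A x) (hΩ : Ω ⊆ range A)
    {x : X} {m : Y →L[ℝ] ℝ} :
    IsLimitingNormal (A ⁻¹' Ω) x (m.comp A) ↔ IsLimitingNormal Ω (A x) m := by
  constructor
  · intro h
    have hcomp : Continuous fun p : X × (X →L[ℝ] ℝ) => p.2.comp P + m - (m.comp A).comp P :=
      ((continuous_snd.clm_comp continuous_const).add continuous_const).sub continuous_const
    refine h.map (g := fun p => (A p.1, p.2.comp P + m - (m.comp A).comp P))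
      ((A.continuous.comp continuous_fst).prodMk hcomp).continuousAt (by simp)
      (Eventually.of_forall ?_)
    rintro ⟨w, l⟩ ⟨hw, hl⟩
    refine ⟨hw, (isFrechetNormal_preimage_comp_iff hAP hΩ).1 ?_⟩
    convert hl using 1
    ext d
    simpa [hAP] using DFunLike.congr_fun (hl.comp_comp_eq_of_preimage hAP hw) d
  · intro h
    have hP : Continuous fun p : Y × (Y →L[ℝ] ℝ) => x + P (p.1 - A x) :=
      continuous_const.add (P.continuous.comp (continuous_fst.sub continuous_const))
    refine h.map (g := fun p => (x + P (p.1 - A x), p.2.comp A))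
      (hP.continuousAt.prodMk (continuousAt_snd.clm_comp continuousAt_const)) (by simp)
      (Eventually.of_forall ?_)
    rintro ⟨u, l⟩ ⟨hu, hl⟩
    have hAu := map_add_apply_sub_of_mem_range hAP x (hΩ hu)
    refine ⟨by rwa [mem_preimage, hAu], (isFrechetNormal_preimage_comp_iff hAP hΩ).2 ?_⟩
    rwa [hAu]

theorem isLimitingNormal_preimage_iff (hAP : ∀ x, A (P (A x)) = A x) (hΩ : Ω ⊆ range A)
    {x : X} {l : X →L[ℝ] ℝ} :
    IsLimitingNormal (A ⁻¹' Ω) x l ↔ ∃ m, IsLimitingNormal Ω (A x) m ∧ m.comp A = l := by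
  constructor
  · intro h
    have hclosed : IsClosed {l : X →L[ℝ] ℝ | (l.comp P).comp A = l} :=
      isClosed_eq (by fun_prop) (by fun_prop)
    have hl : l ∈ {l : X →L[ℝ] ℝ | (l.comp P).comp A = l} := h.mem_of_isClosed hclosed <|
      Eventually.of_forall fun y hy l' hl' => hl'.comp_comp_eq_of_preimage hAP hy
    rw [mem_ofPred_eq] at hl
    exact ⟨l.comp P, (isLimitingNormal_preimage_comp_iff hAP hΩ).1 (by rwa [hl]), hl⟩
  · rintro ⟨m, hm, rfl⟩
    exact (isLimitingNormal_preimage_comp_iff hAP hΩ).2 hm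

end LimitingNormals

section AubinNecessity

variable {X Y : Type*} [NormedAddCommGroup X] [NormedSpace ℝ X]
  [NormedAddCommGroup Y] [NormedSpace ℝ Y] {Φ : X → Set Y} {κ : ℝ≥0} {x : X} {y : Y}

theorem IsFrechetNormal.norm_comp_inr_le {q : X × Y} {l : X × Y →L[ℝ] ℝ}
    (hl : IsFrechetNormal (svGraph Φ) q l)
    (h : ∀ᶠ v in 𝓝 q.2, ∃ x' ∈ svInv Φ v, ‖x' - q.1‖ ≤ κ * ‖v - q.2‖) :
    ‖l.comp (.inr ℝ X Y)‖ ≤ κ * ‖l.comp (.inl ℝ X Y)‖ := by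
  have hle : ∀ d, l.comp (.inr ℝ X Y) d ≤ κ * ‖l.comp (.inl ℝ X Y)‖ * ‖d‖ := fun d => by
    refine sub_nonpos.1 (hl.nonpos_of_frequently (M := max (κ * ‖d‖) ‖d‖) ?_)
    have htend : Tendsto (fun t : ℝ => q.2 + t • d) (𝓝[>] 0) (𝓝 q.2) := by
      refine tendsto_nhdsWithin_of_tendsto_nhds (Continuous.tendsto' ?_ _ _ (by simp))
      fun_prop
    refine Eventually.frequently ?_
    filter_upwards [htend.eventually h, self_mem_nhdsWithin] with t ⟨x', hx', hdist⟩ ht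
    replace ht : 0 < t := ht
    have hu : ‖t⁻¹ • (x' - q.1)‖ ≤ κ * ‖d‖ := by
      rw [add_sub_cancel_left, norm_smul, Real.norm_of_nonneg ht.le] at hdist
      rw [norm_smul, norm_inv, Real.norm_of_nonneg ht.le, inv_mul_le_iff₀ ht]
      linarith
    refine ⟨(t⁻¹ • (x' - q.1), d), max_le_max hu le_rfl, ?_, ?_⟩
    · suffices q + t • (t⁻¹ • (x' - q.1), d) = (x', q.2 + t • d) by rwa [this]
      ext <;> simp [ht.ne']
    · have hinl := abs_le.1 ((l.comp (.inl ℝ X Y)).le_opNorm_of_le hu)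
      have hsplit : l (t⁻¹ • (x' - q.1), d) =
          l.comp (.inl ℝ X Y) (t⁻¹ • (x' - q.1)) + l.comp (.inr ℝ X Y) d :=
        (l.comp_inl_add_comp_inr (t⁻¹ • (x' - q.1), d)).symm
      linarith [hinl.1]
  refine ContinuousLinearMap.opNorm_le_bound _ (by positivity) fun d => abs_le.2 ⟨?_, hle d⟩
  have := hle (-d)
  rw [map_neg, norm_neg] at this
  linarith

theorem AubinWith.norm_comp_inr_le_of_isLimitingNormal (h : AubinWith κ (svInv Φ) y x)
    {l : X × Y →L[ℝ] ℝ} (hl : IsLimitingNormal (svGraph Φ) (x, y) l) :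
    ‖l.comp (.inr ℝ X Y)‖ ≤ κ * ‖l.comp (.inl ℝ X Y)‖ := by
  obtain ⟨V, hV, U, hU, hVU⟩ := h
  refine hl.mem_of_isClosed (K := {l | ‖l.comp (.inr ℝ X Y)‖ ≤ κ * ‖l.comp (.inl ℝ X Y)‖})
    (isClosed_le (by fun_prop) (by fun_prop)) ?_
  filter_upwards [prod_mem_nhds hU (eventually_mem_nhds_iff.2 hV)] with q ⟨hqU, hqV⟩ hq l hl
  refine hl.norm_comp_inr_le ?_
  filter_upwards [hqV] with v hv
  obtain ⟨x', hx', hdist⟩ := hVU v hv q.2 (mem_of_mem_nhds hqV) q.1 ⟨hq, hqU⟩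
  exact ⟨x', hx', by rwa [norm_sub_rev]⟩

end AubinNecessity

section Penalization

theorem LocClosedAt.eventually_isCompact {X : Type*} [PseudoMetricSpace X] [ProperSpace X]
    {s : Set X} {p : X} (h : LocClosedAt s p) :
    ∀ᶠ R in 𝓝[>] (0 : ℝ), IsCompact (s ∩ closedBall p R) := by
  obtain ⟨r, hr, hcl⟩ := h
  filter_upwards [Ioo_mem_nhdsGT hr] with R hR
  rw [← inter_eq_self_of_subset_right (closedBall_subset_closedBall hR.2.le), ← inter_assoc]
  exact (isCompact_closedBall p R).inter_left hcl

variable {E F : Type*} [NormedAddCommGroup E] [NormedAddCommGroup F]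

theorem exists_far_of_not_aubinWith {Φ : E → Set F} {κ : ℝ≥0} {x : E} {y : F}
    (h : ¬ AubinWith κ (svInv Φ) y x) {ρ : ℝ} (hρ : 0 < ρ) :
    ∃ a ∈ ball x ρ, ∃ v ∈ ball y ρ, ∃ b ∈ ball y ρ, (a, v) ∈ svGraph Φ ∧
      ∀ u, (u, b) ∈ svGraph Φ → κ * ‖v - b‖ < ‖u - a‖ := by
  contrapose! h
  refine ⟨ball y ρ, ball_mem_nhds y hρ, ball x ρ, ball_mem_nhds x hρ, ?_⟩
  rintro b hb v hv a ⟨hav, ha⟩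
  obtain ⟨u, hu, hle⟩ := h a ha v hv b hb hav
  exact ⟨u, hu, by rwa [norm_sub_rev a, norm_sub_rev b]⟩

/-- The function minimized over the graph of `Φ` to find a normal witnessing that some solution
`a` is far from `Φ⁻¹ b`; the square root smooths `‖q.1 - a‖` at the point `a`. -/
def penalty (κ δ : ℝ) (a : E) (b : F) (q : E × F) : ℝ :=
  κ * ‖q.2 - b‖ + √(‖q.1 - a‖ ^ 2 + δ ^ 2)

theorem exists_isMinOn_penalty {K : Set (E × F)} (hK : IsCompact K) {κ κ' : ℝ} (hκ : κ' < κ)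
    {a : E} {b v : F} (hav : (a, v) ∈ K) (hfar : ∀ u, (u, b) ∈ K → κ * ‖v - b‖ < ‖u - a‖) :
    ∃ δ ≠ 0, ∃ q ∈ K, IsMinOn (penalty κ' δ a b) K q ∧ q.2 ≠ b ∧
      κ' * ‖q.2 - b‖ + ‖q.1 - a‖ ≤ κ * ‖v - b‖ := by
  have hvb : v ≠ b := by
    rintro rfl
    simpa using hfar a hav
  have hδ : 0 < (κ - κ') * ‖v - b‖ := mul_pos (sub_pos.2 hκ) (norm_sub_pos_iff.2 hvb)
  set δ := (κ - κ') * ‖v - b‖ with hδ_def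
  have hcont : Continuous (penalty κ' δ a b) := by unfold penalty; fun_prop
  obtain ⟨q, hqK, hmin⟩ := hK.exists_isMinOn ⟨_, hav⟩ hcont.continuousOn
  have hle : κ' * ‖q.2 - b‖ + ‖q.1 - a‖ ≤ κ * ‖v - b‖ := by
    calc κ' * ‖q.2 - b‖ + ‖q.1 - a‖ ≤ penalty κ' δ a b q := by
          unfold penalty
          gcongr
          exact Real.le_sqrt_of_sq_le (by linarith [sq_nonneg δ])
      _ ≤ penalty κ' δ a b (a, v) := hmin hav
      _ = κ * ‖v - b‖ := by
          simp only [penalty, sub_self, norm_zero, ne_eq, OfNat.ofNat_ne_zero, not_false_eq_true,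
            zero_pow, zero_add, Real.sqrt_sq hδ.le]
          rw [hδ_def]
          ring
  refine ⟨δ, hδ.ne', q, hqK, hmin, ?_, hle⟩
  rintro hqb
  rw [hqb, sub_self, norm_zero, mul_zero, zero_add] at hle
  exact (hfar q.1 (hqb ▸ hqK)).not_ge hle

theorem exists_isLocalMinOn_penalty_of_not_aubinWith [ProperSpace E] [ProperSpace F]
    {Φ : E → Set F} {x : E} {y : F} {κ κ' : ℝ≥0} (hcl : LocClosedAt (svGraph Φ) (x, y))
    (h : ¬ AubinWith κ (svInv Φ) y x) (hκ' : 0 < κ') (hκ : κ' < κ) {ε : ℝ} (hε : 0 < ε) :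
    ∃ q ∈ ball (x, y) ε, q ∈ svGraph Φ ∧
      ∃ δ ≠ 0, ∃ a b, IsLocalMinOn (penalty κ' δ a b) (svGraph Φ) q ∧ q.2 ≠ b := by
  obtain ⟨R, hK, hR, hRε⟩ := (hcl.eventually_isCompact.and (Ioo_mem_nhdsGT hε)).exists
  obtain ⟨ρ, hρR, hρ⟩ : ∃ ρ : ℝ, ρ + 2 * κ * ρ + 2 * κ * ρ / κ' < R ∧ 0 < ρ := by
    have htend : Tendsto (fun ρ : ℝ => ρ + 2 * κ * ρ + 2 * κ * ρ / κ') (𝓝[>] 0) (𝓝 0) :=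
      tendsto_nhdsWithin_of_tendsto_nhds (Continuous.tendsto' (by fun_prop) _ _ (by simp))
    exact ((htend.eventually_lt_const hR).and self_mem_nhdsWithin).exists
  have hκρ : 0 ≤ 2 * κ * ρ := by positivity
  have hκρ' : 0 ≤ 2 * κ * ρ / κ' := by positivity
  obtain ⟨a, ha, v, hv, b, hb, hav, hfar⟩ := exists_far_of_not_aubinWith h hρ
  rw [mem_ball] at ha hv hb
  have hvb : κ * ‖v - b‖ ≤ 2 * κ * ρ := by
    calc κ * ‖v - b‖ ≤ κ * (ρ + ρ) := by
          gcongr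
          rw [← dist_eq_norm]
          linarith [dist_triangle_right v b y]
      _ = 2 * κ * ρ := by ring
  have havK : (a, v) ∈ svGraph Φ ∩ closedBall (x, y) R :=
    ⟨hav, max_le (ha.le.trans (by linarith)) (hv.le.trans (by linarith))⟩
  obtain ⟨δ, hδ, q, ⟨hq, -⟩, hmin, hqb, hle⟩ :=
    exists_isMinOn_penalty hK (NNReal.coe_lt_coe.2 hκ) havK fun u hu => hfar u hu.1
  have hqball : q ∈ ball (x, y) R := by
    have hqa : dist q.1 a ≤ 2 * κ * ρ := by
      rw [dist_eq_norm]
      linarith [mul_nonneg κ'.coe_nonneg (norm_nonneg (q.2 - b))]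
    have hqb : dist q.2 b ≤ 2 * κ * ρ / κ' := by
      rw [le_div_iff₀' (NNReal.coe_pos.2 hκ'), dist_eq_norm]
      linarith [norm_nonneg (q.1 - a)]
    exact max_lt ((dist_triangle q.1 a x).trans_lt (by linarith))
      ((dist_triangle q.2 b y).trans_lt (by linarith))
  refine ⟨q, ball_subset_ball hRε.le hqball, hq, δ, hδ, a, b, ?_, hqb⟩
  have hlocal := hmin.localize
  rwa [IsLocalMinOn, nhdsWithin_inter_of_mem' (mem_nhdsWithin_of_mem_nhds
    (closedBall_mem_nhds_of_mem hqball))] at hlocal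

end Penalization

theorem norm_le_norm_comp_inl_add_norm_comp_inr {X Y : Type*} [NormedAddCommGroup X]
    [NormedSpace ℝ X] [NormedAddCommGroup Y] [NormedSpace ℝ Y] (l : X × Y →L[ℝ] ℝ) :
    ‖l‖ ≤ ‖l.comp (.inl ℝ X Y)‖ + ‖l.comp (.inr ℝ X Y)‖ := by
  refine l.opNorm_le_bound (by positivity) fun p => ?_
  calc ‖l p‖ = ‖l.comp (.inl ℝ X Y) p.1 + l.comp (.inr ℝ X Y) p.2‖ := by
        rw [ContinuousLinearMap.comp_inl_add_comp_inr]
    _ ≤ ‖l.comp (.inl ℝ X Y)‖ * ‖p‖ + ‖l.comp (.inr ℝ X Y)‖ * ‖p‖ :=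
        norm_add_le_of_le (ContinuousLinearMap.le_opNorm_of_le _ (norm_fst_le p))
          (ContinuousLinearMap.le_opNorm_of_le _ (norm_snd_le p))
    _ = (‖l.comp (.inl ℝ X Y)‖ + ‖l.comp (.inr ℝ X Y)‖) * ‖p‖ := (add_mul _ _ _).symm

section AubinSufficiency

variable {E F : Type*} [NormedAddCommGroup E] [InnerProductSpace ℝ E]
  [NormedAddCommGroup F] [InnerProductSpace ℝ F]

theorem hasFDerivAt_sqrt_norm_sq_add_sq {δ : ℝ} (hδ : δ ≠ 0) (u : E) :
    HasFDerivAt (fun u : E => √(‖u‖ ^ 2 + δ ^ 2)) ((√(‖u‖ ^ 2 + δ ^ 2))⁻¹ • innerSL ℝ u) u := by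
  have hsq := ((hasStrictFDerivAt_norm_sq u).hasFDerivAt.add_const (δ ^ 2)).sqrt (by positivity)
  convert hsq using 1
  ext d
  simp only [smul_apply, coe_innerSL_apply, smul_eq_mul, one_div, mul_inv_rev, nsmul_eq_mul,
    Nat.cast_ofNat]
  ring

theorem exists_hasFDerivAt_penalty {κ δ : ℝ} (hκ : 0 ≤ κ) (hδ : δ ≠ 0) (a : E) {b : F}
    {q : E × F} (hq : q.2 ≠ b) :
    ∃ l, HasFDerivAt (penalty κ δ a b) l q ∧
      ‖l.comp (.inl ℝ E F)‖ ≤ 1 ∧ ‖l.comp (.inr ℝ E F)‖ = κ := by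
  have hqb : q.2 - b ≠ 0 := sub_ne_zero.2 hq
  have : Nontrivial F := ⟨_, _, hq⟩
  have hnorm : DifferentiableAt ℝ (‖·‖) (q.2 - b) := (contDiffAt_norm ℝ hqb).differentiableAt
    one_ne_zero
  let m₁ : E →L[ℝ] ℝ := (√(‖q.1 - a‖ ^ 2 + δ ^ 2))⁻¹ • innerSL ℝ (q.1 - a)
  let m₂ : F →L[ℝ] ℝ := κ • fderiv ℝ (‖·‖) (q.2 - b)
  refine ⟨m₁.coprod m₂, ?_, ?_, ?_⟩
  · have h₁ := (hasFDerivAt_sqrt_norm_sq_add_sq hδ (q.1 - a)).comp q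
      (hasFDerivAt_fst.sub_const a)
    have h₂ := (hnorm.hasFDerivAt.comp q (hasFDerivAt_snd.sub_const b)).const_mul κ
    refine (h₂.add h₁).congr_fderiv ?_
    ext <;> simp [m₁, m₂]
  · rw [ContinuousLinearMap.coprod_comp_inl, norm_smul, norm_inv, Real.norm_of_nonneg
      (Real.sqrt_nonneg _), innerSL_apply_norm, inv_mul_le_one₀ (by positivity)]
    exact Real.le_sqrt_of_sq_le (by linarith [sq_nonneg δ])
  · rw [ContinuousLinearMap.coprod_comp_inr, norm_smul, norm_fderiv_norm hnorm, mul_one,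
      Real.norm_of_nonneg hκ]

variable [FiniteDimensional ℝ E] [FiniteDimensional ℝ F]

theorem isCompact_setOf_norm_comp_inl_le_and_norm_comp_inr_eq (r s : ℝ) :
    IsCompact {l : E × F →L[ℝ] ℝ | ‖l.comp (.inl ℝ E F)‖ ≤ r ∧ ‖l.comp (.inr ℝ E F)‖ = s} := by
  have : ProperSpace (E × F →L[ℝ] ℝ) := FiniteDimensional.proper_real (E × F →L[ℝ] ℝ)
  have hinl : IsClosed {l : E × F →L[ℝ] ℝ | ‖l.comp (.inl ℝ E F)‖ ≤ r} :=
    isClosed_le (by fun_prop) (by fun_prop)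
  have hinr : IsClosed {l : E × F →L[ℝ] ℝ | ‖l.comp (.inr ℝ E F)‖ = s} :=
    isClosed_eq (by fun_prop) (by fun_prop)
  refine Metric.isCompact_of_isClosed_isBounded (α := E × F →L[ℝ] ℝ) (hinl.inter hinr) ?_
  refine isBounded_iff_forall_norm_le.2 ⟨r + s, ?_⟩
  rintro l ⟨hr, rfl⟩
  linarith [norm_le_norm_comp_inl_add_norm_comp_inr l]

theorem frequently_exists_isFrechetNormal_of_not_aubinWith {Φ : E → Set F} {x : E} {y : F}
    {κ κ' : ℝ≥0} (hcl : LocClosedAt (svGraph Φ) (x, y)) (h : ¬ AubinWith κ (svInv Φ) y x)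
    (hκ' : 0 < κ') (hκ : κ' < κ) :
    ∃ᶠ q in 𝓝 (x, y), q ∈ svGraph Φ ∧
      ∃ l ∈ {l : E × F →L[ℝ] ℝ | ‖l.comp (.inl ℝ E F)‖ ≤ 1 ∧ ‖l.comp (.inr ℝ E F)‖ = κ'},
        IsFrechetNormal (svGraph Φ) q l := by
  have : ProperSpace E := FiniteDimensional.proper_real E
  have : ProperSpace F := FiniteDimensional.proper_real F
  refine nhds_basis_ball.frequently_iff.2 fun ε hε => ?_
  obtain ⟨q, hqε, hq, δ, hδ, a, b, hmin, hqb⟩ :=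
    exists_isLocalMinOn_penalty_of_not_aubinWith hcl h hκ' hκ hε
  obtain ⟨l, hl, hinl, hinr⟩ := exists_hasFDerivAt_penalty κ'.coe_nonneg hδ a hqb
  refine ⟨q, hqε, hq, -l, ?_, isFrechetNormal_neg_of_isLocalMinOn hmin hl⟩
  simpa only [mem_ofPred_eq, ContinuousLinearMap.neg_comp, norm_neg] using ⟨hinl, hinr⟩

theorem exists_isLimitingNormal_of_not_aubinWith {Φ : E → Set F} {x : E} {y : F} {κ κ' : ℝ≥0}
    (hcl : LocClosedAt (svGraph Φ) (x, y)) (h : ¬ AubinWith κ (svInv Φ) y x)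
    (hκ' : 0 < κ') (hκ : κ' < κ) :
    ∃ l, IsLimitingNormal (svGraph Φ) (x, y) l ∧
      ‖l.comp (.inl ℝ E F)‖ ≤ 1 ∧ ‖l.comp (.inr ℝ E F)‖ = κ' := by
  obtain ⟨l, hl, hlim⟩ := exists_isLimitingNormal_of_frequently
    (isCompact_setOf_norm_comp_inl_le_and_norm_comp_inr_eq 1 κ')
    (frequently_exists_isFrechetNormal_of_not_aubinWith hcl h hκ' hκ)
  exact ⟨l, hlim, hl⟩

theorem exists_isLimitingNormal_of_forall_not_aubinWith {Φ : E → Set F} {x : E} {y : F}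
    (hcl : LocClosedAt (svGraph Φ) (x, y)) (h : ∀ κ, ¬ AubinWith κ (svInv Φ) y x) :
    ∃ l, IsLimitingNormal (svGraph Φ) (x, y) l ∧ l.comp (.inl ℝ E F) = 0 ∧
      ‖l.comp (.inr ℝ E F)‖ = 1 := by
  have hex : ∀ ε : ℝ≥0, 0 < ε → ∃ l, IsLimitingNormal (svGraph Φ) (x, y) l ∧
      ‖l.comp (.inl ℝ E F)‖ ≤ ε ∧ ‖l.comp (.inr ℝ E F)‖ = 1 := fun ε hε => by
    obtain ⟨l, hl, hinl, hinr⟩ :=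
      exists_isLimitingNormal_of_not_aubinWith hcl (h (ε⁻¹ + 1)) (inv_pos.2 hε) (lt_add_one _)
    refine ⟨(ε : ℝ) • l, hl.smul hε, ?_, ?_⟩
    · rw [ContinuousLinearMap.smul_comp, norm_smul, NNReal.norm_eq]
      exact mul_le_of_le_one_right ε.coe_nonneg hinl
    · rw [ContinuousLinearMap.smul_comp, norm_smul, NNReal.norm_eq, hinr, NNReal.coe_inv]
      exact mul_inv_cancel₀ (NNReal.coe_ne_zero.2 hε.ne')
  obtain ⟨l₁, hl₁, hinl₁, hinr₁⟩ := hex 1 one_pos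
  obtain ⟨l, ⟨⟨hinl, hinr⟩, hl⟩, hmin⟩ :=
    ((isCompact_setOf_norm_comp_inl_le_and_norm_comp_inr_eq (E := E) (F := F) 1 1).inter_right
      (isClosed_setOf_isLimitingNormal (svGraph Φ) (x, y))).exists_isMinOn
      (f := fun l => ‖l.comp (.inl ℝ E F)‖) ⟨l₁, ⟨by simpa using hinl₁, hinr₁⟩, hl₁⟩ (by fun_prop)
  refine ⟨l, hl, by_contra fun hne => ?_, hinr⟩
  have hpos := norm_pos_iff.2 hne
  obtain ⟨l₂, hl₂, hinl₂, hinr₂⟩ := hex (‖l.comp (.inl ℝ E F)‖₊ / 2) (half_pos hpos)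
  rw [NNReal.coe_div, coe_nnnorm, NNReal.coe_ofNat] at hinl₂
  have hle : ‖l.comp (.inl ℝ E F)‖ ≤ ‖l₂.comp (.inl ℝ E F)‖ :=
    hmin ⟨⟨by linarith, hinr₂⟩, hl₂⟩
  linarith

end AubinSufficiency

section Coderivatives

theorem mem_frechetNormalCone_iff {X : Type*} [NormedAddCommGroup X] [InnerProductSpace ℝ X]
    {Ω : Set X} {x v : X} : v ∈ frechetNormalCone Ω x ↔ IsFrechetNormal Ω x (innerSL ℝ v) := by
  refine forall₂_congr fun ε _ => ?_
  rw [Metric.nhdsWithin_basis_ball.eventually_iff]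
  simp only [mem_inter_iff, mem_ball, dist_eq_norm, innerSL_apply_apply, and_imp]
  exact exists_congr fun δ => and_congr_right fun _ => forall_congr' fun y => forall_comm

theorem mem_limitingNormalCone_iff {X : Type*} [NormedAddCommGroup X] [InnerProductSpace ℝ X]
    [CompleteSpace X] {Ω : Set X} {x v : X} :
    v ∈ limitingNormalCone Ω x ↔ IsLimitingNormal Ω x (innerSL ℝ v) := by
  constructor
  · rintro ⟨xk, vk, hxk, hx, hv, hnormal⟩
    refine mem_closure_of_tendsto (hx.prodMk_nhds (((innerSL ℝ).continuous.tendsto v).comp hv)) ?_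
    exact Eventually.of_forall fun k => ⟨hxk k, mem_frechetNormalCone_iff.1 (hnormal k)⟩
  · intro h
    obtain ⟨p, hp, hlim⟩ := mem_closure_iff_seq_limit.1 h
    let J := InnerProductSpace.toDual ℝ X
    refine ⟨fun k => (p k).1, fun k => J.symm (p k).2, fun k => (hp k).1, hlim.fst_nhds, ?_,
      fun k => mem_frechetNormalCone_iff.2 ?_⟩
    · have hJ := (J.symm.continuous.tendsto _).comp hlim.snd_nhds
      rwa [show J.symm (innerSL ℝ v) = v from J.symm_apply_apply v] at hJ
    · rw [show innerSL ℝ (J.symm (p k).2) = (p k).2 from J.apply_symm_apply _]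
      exact (hp k).2

theorem coprod_innerSL_inj {E F : Type*} [NormedAddCommGroup E] [InnerProductSpace ℝ E]
    [NormedAddCommGroup F] [InnerProductSpace ℝ F] {a a' : E} {b b' : F} :
    (innerSL ℝ a).coprod (innerSL ℝ b) = (innerSL ℝ a').coprod (innerSL ℝ b') ↔
      a = a' ∧ b = b' := by
  refine ⟨fun h => ⟨ext_inner_right ℝ fun d => ?_, ext_inner_right ℝ fun d => ?_⟩, ?_⟩
  · simpa using DFunLike.congr_fun h (d, 0)
  · simpa using DFunLike.congr_fun h (0, d)
  · rintro ⟨rfl, rfl⟩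
    rfl

variable {E F : Type*} [NormedAddCommGroup E] [InnerProductSpace ℝ E] [CompleteSpace E]
  [NormedAddCommGroup F] [InnerProductSpace ℝ F] [CompleteSpace F]
  {Φ : E → Set F} {x w : E} {y ξ : F}

theorem exists_eq_coprod_innerSL (l : E × F →L[ℝ] ℝ) :
    ∃ a b, l = (innerSL ℝ a).coprod (innerSL ℝ b) := by
  obtain ⟨a, ha⟩ := (InnerProductSpace.toDual ℝ E).surjective (l.comp (.inl ℝ E F))
  obtain ⟨b, hb⟩ := (InnerProductSpace.toDual ℝ F).surjective (l.comp (.inr ℝ E F))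
  refine ⟨a, b, ?_⟩
  change l = (InnerProductSpace.toDual ℝ E a).coprod (InnerProductSpace.toDual ℝ F b)
  rw [ha, hb, ← ContinuousLinearMap.comp_coprod, ContinuousLinearMap.coprod_inl_inr,
    ContinuousLinearMap.comp_id]

theorem mem_coDeriv_iff :
    w ∈ coDeriv Φ x y ξ ↔
      IsLimitingNormal (svGraph Φ) (x, y) ((innerSL ℝ w).coprod (innerSL ℝ (-ξ))) := by
  let A : WithLp 2 (E × F) →L[ℝ] E × F := (WithLp.prodContinuousLinearEquiv 2 ℝ E F)
  let P : E × F →L[ℝ] WithLp 2 (E × F) := (WithLp.prodContinuousLinearEquiv 2 ℝ E F).symm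
  have hinner : innerSL ℝ ((WithLp.equiv 2 (E × F)).symm (w, -ξ)) =
      ((innerSL ℝ w).coprod (innerSL ℝ (-ξ))).comp A := rfl
  rw [coDeriv, mem_ofPred_eq, mem_limitingNormalCone_iff, hinner, Equiv.image_symm_eq_preimage]
  exact isLimitingNormal_preimage_comp_iff (A := A) (P := P) (fun _ => rfl) fun p _ =>
    ⟨P p, (WithLp.prodContinuousLinearEquiv 2 ℝ E F).apply_symm_apply p⟩

theorem IsLimitingNormal.exists_mem_coDeriv {l : E × F →L[ℝ] ℝ}
    (h : IsLimitingNormal (svGraph Φ) (x, y) l) :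
    ∃ ξ, ∃ w ∈ coDeriv Φ x y ξ, ‖w‖ = ‖l.comp (.inl ℝ E F)‖ ∧ ‖ξ‖ = ‖l.comp (.inr ℝ E F)‖ := by
  obtain ⟨w, η, rfl⟩ := exists_eq_coprod_innerSL l
  refine ⟨-η, w, mem_coDeriv_iff.2 (by rwa [neg_neg]), ?_, ?_⟩
  · rw [ContinuousLinearMap.coprod_comp_inl, innerSL_apply_norm]
  · rw [ContinuousLinearMap.coprod_comp_inr, innerSL_apply_norm, norm_neg]

theorem AubinWith.norm_le_of_mem_coDeriv {κ : ℝ≥0} (h : AubinWith κ (svInv Φ) y x)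
    (hw : w ∈ coDeriv Φ x y ξ) : ‖ξ‖ ≤ κ * ‖w‖ := by
  have hle := h.norm_comp_inr_le_of_isLimitingNormal (mem_coDeriv_iff.1 hw)
  rwa [ContinuousLinearMap.coprod_comp_inl, ContinuousLinearMap.coprod_comp_inr,
    innerSL_apply_norm, innerSL_apply_norm, norm_neg] at hle

end Coderivatives

section MordukhovichCriterion

variable {E F : Type*} [NormedAddCommGroup E] [InnerProductSpace ℝ E] [FiniteDimensional ℝ E]
  [NormedAddCommGroup F] [InnerProductSpace ℝ F] [FiniteDimensional ℝ F]
  {Φ : E → Set F} {x : E} {y : F}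

theorem exists_aubinWith_svInv_iff (hcl : LocClosedAt (svGraph Φ) (x, y)) :
    (∃ κ, AubinWith κ (svInv Φ) y x) ↔ ∀ ξ, 0 ∈ coDeriv Φ x y ξ → ξ = 0 := by
  have := FiniteDimensional.complete ℝ E
  have := FiniteDimensional.complete ℝ F
  constructor
  · rintro ⟨κ, hκ⟩ ξ hξ
    simpa using hκ.norm_le_of_mem_coDeriv hξ
  · contrapose!
    intro h
    obtain ⟨l, hl, hinl, hinr⟩ := exists_isLimitingNormal_of_forall_not_aubinWith hcl h
    obtain ⟨ξ, w, hw, hwl, hξl⟩ := hl.exists_mem_coDeriv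
    rw [hinl, norm_zero, norm_eq_zero] at hwl
    rw [hinr] at hξl
    exact ⟨ξ, hwl ▸ hw, norm_ne_zero_iff.1 (hξl ▸ one_ne_zero)⟩

theorem lipMod_svInv_eq_iSup (hcl : LocClosedAt (svGraph Φ) (x, y)) :
    lipMod (svInv Φ) y x =
      ⨆ (ξ : F) (_ : (coDeriv Φ x y ξ ∩ closedBall 0 1).Nonempty), (‖ξ‖₊ : ℝ≥0∞) := by
  have := FiniteDimensional.complete ℝ E
  have := FiniteDimensional.complete ℝ F
  apply le_antisymm
  · refine ENNReal.le_of_forall_nnreal_lt fun κ' hκ' => ?_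
    obtain rfl | hpos := eq_zero_or_pos κ'
    · exact zero_le
    obtain ⟨κ, hκ'κ, hκ⟩ := ENNReal.lt_iff_exists_nnreal_btwn.1 hκ'
    have hnot : ¬ AubinWith κ (svInv Φ) y x := fun h => hκ.not_ge (iInf₂_le κ h)
    obtain ⟨l, hl, hinl, hinr⟩ :=
      exists_isLimitingNormal_of_not_aubinWith hcl hnot hpos (ENNReal.coe_lt_coe.1 hκ'κ)
    obtain ⟨ξ, w, hw, hwl, hξl⟩ := hl.exists_mem_coDeriv
    refine le_iSup₂_of_le ξ ⟨w, hw, mem_closedBall_zero_iff.2 (hwl.trans_le hinl)⟩ ?_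
    exact ENNReal.coe_le_coe.2 (NNReal.coe_le_coe.1 (hξl.trans hinr).ge)
  · refine iSup₂_le fun ξ hξ => le_iInf₂ fun κ hκ => ENNReal.coe_le_coe.2 ?_
    obtain ⟨w, hw, hw1⟩ := hξ
    calc ‖ξ‖ ≤ κ * ‖w‖ := hκ.norm_le_of_mem_coDeriv hw
      _ ≤ κ := mul_le_of_le_one_right κ.coe_nonneg (mem_closedBall_zero_iff.1 hw1)

end MordukhovichCriterion

section LocalClosedness

variable {X Y : Type*} [PseudoMetricSpace X] [PseudoMetricSpace Y] {s t : Set X} {x : X}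

theorem locClosedAt_of_isClosed (hs : IsClosed s) (x : X) : LocClosedAt s x :=
  ⟨1, one_pos, hs.inter isClosed_closedBall⟩

theorem LocClosedAt.inter (hs : LocClosedAt s x) (ht : LocClosedAt t x) :
    LocClosedAt (s ∩ t) x := by
  obtain ⟨r, hr, hsr⟩ := hs
  obtain ⟨r', hr', htr'⟩ := ht
  refine ⟨min r r', lt_min hr hr', ?_⟩
  have hball : closedBall x (min r r') = closedBall x r ∩ closedBall x r' := by
    ext y
    simp only [mem_closedBall, le_min_iff, mem_inter_iff]
  rw [hball, inter_inter_inter_comm]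
  exact hsr.inter htr'

theorem LocClosedAt.preimage {T : X → Y} {Ω : Set Y} (hΩ : LocClosedAt Ω (T x))
    (hT : ∀ᶠ y in 𝓝 x, ContinuousAt T y) : LocClosedAt (T ⁻¹' Ω) x := by
  obtain ⟨r, hr, hclosed⟩ := hΩ
  obtain ⟨ε, hε, hball⟩ := nhds_basis_closedBall.eventually_iff.1
    (hT.and (hT.self_of_nhds.eventually_mem (closedBall_mem_nhds (T x) hr)))
  refine ⟨ε, hε, ?_⟩
  have hT' : ContinuousOn T (closedBall x ε) := fun y hy => (hball hy).1.continuousWithinAt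
  convert hT'.preimage_isClosed_of_isClosed isClosed_closedBall hclosed using 1
  ext y
  simp only [mem_inter_iff, mem_preimage]
  exact ⟨fun h => ⟨h.2, h.1, (hball h.2).2⟩, fun h => ⟨h.2.1, h.1⟩⟩

end LocalClosedness

section GeneralizedEquations

/-- The set-valued map `z ↦ f z + B (G (C z))` of the generalized equation. -/
def geMap {E H U V : Type*} [Add H] (f : E → H) (B : V → H) (C : E → U) (G : U → Set V) :
    E → Set H :=
  fun z => {w | ∃ v ∈ G (C z), w = f z + B v}

/-- The set-valued map `G` with its domain restricted to the range of `C`; for `G = F` this is the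
map `F_C` of the generalized equation. -/
def restrictToRange {E U V : Type*} (C : E → U) (G : U → Set V) : U → Set V :=
  fun u => {v | (∃ z, C z = u) ∧ v ∈ G u}

theorem svGraph_geMap_eq_image {E H U V : Type*} [Add H] (f : E → H) (B : V → H) (C : E → U)
    (G : U → Set V) :
    svGraph (geMap f B C G) = (fun q : E × V => (q.1, f q.1 + B q.2)) ''
      (Prod.map C id ⁻¹' svGraph (restrictToRange C G)) := by
  ext ⟨z, w⟩
  constructor
  · rintro ⟨v, hv, hw⟩
    exact ⟨(z, v), ⟨⟨z, rfl⟩, hv⟩, Prod.ext rfl hw.symm⟩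
  · rintro ⟨⟨z', v⟩, ⟨-, hv⟩, h⟩
    obtain ⟨rfl, rfl⟩ := Prod.mk.inj h
    exact ⟨v, hv, rfl⟩

theorem svGraph_geMap_eq_preimage_inter {E H U V : Type*} [AddCommGroup H] (f : E → H) {B : V → H}
    (C : E → U) (G : U → Set V) {L : H → V} (hLB : Function.LeftInverse L B) :
    svGraph (geMap f B C G) = (fun q : E × H => (C q.1, L (q.2 - f q.1))) ⁻¹' svGraph G ∩
      (fun q : E × H => q.2 - f q.1) ⁻¹' range B := by
  ext ⟨z, w⟩
  simp only [svGraph, geMap, mem_ofPred_eq, mem_inter_iff, mem_preimage, mem_range]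
  constructor
  · rintro ⟨v, hv, rfl⟩
    exact ⟨by rwa [add_sub_cancel_left, hLB v], v, (add_sub_cancel_left _ _).symm⟩
  · rintro ⟨hv, v, hBv⟩
    refine ⟨v, ?_, by rw [hBv, add_sub_cancel]⟩
    rwa [← hBv, hLB v] at hv

theorem locClosedAt_svGraph_geMap {E H U V : Type*} [PseudoMetricSpace E] [NormedAddCommGroup H]
    [PseudoMetricSpace U] [PseudoMetricSpace V] {f : E → H} {B : V → H} {C : E → U} {G : U → Set V}
    {L : H → V} (hLB : Function.LeftInverse L B) (hL : Continuous L) (hB : Continuous B)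
    (hC : Continuous C) {z : E} {v : V} (hf : ∀ᶠ x in 𝓝 z, ContinuousAt f x)
    (hG : LocClosedAt (svGraph G) (C z, v)) :
    LocClosedAt (svGraph (geMap f B C G)) (z, f z + B v) := by
  rw [svGraph_geMap_eq_preimage_inter f C G hLB]
  have hres : ∀ᶠ q in 𝓝 (z, f z + B v), ContinuousAt (fun q : E × H => q.2 - f q.1) q :=
    (continuousAt_fst.eventually hf).mono fun q hq =>
      continuousAt_snd.sub (hq.comp continuousAt_fst)
  refine LocClosedAt.inter (LocClosedAt.preimage ?_ ?_)
    (LocClosedAt.preimage (locClosedAt_of_isClosed (hLB.isClosed_range hL hB) _) hres)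
  · rwa [add_sub_cancel_left, hLB v]
  · exact hres.mono fun q hq =>
      (hC.comp continuous_fst).continuousAt.prodMk (hL.continuousAt.comp hq)

end GeneralizedEquations

section ChainRule

theorem isLimitingNormal_svGraph_geMap_iff {E H U V : Type*}
    [NormedAddCommGroup E] [NormedSpace ℝ E] [NormedAddCommGroup H] [NormedSpace ℝ H]
    [NormedAddCommGroup U] [NormedSpace ℝ U] [NormedAddCommGroup V] [NormedSpace ℝ V]
    {f : E → H} {B : V →L[ℝ] H} {C : E →L[ℝ] U} {G : U → Set V} {L : H →L[ℝ] V} {P : U →L[ℝ] E}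
    (hLB : Function.LeftInverse L B) (hCP : ∀ x, C (P (C x)) = C x) {z : E} {v : V}
    (hf : ContDiffAt ℝ 1 f z) {l : E × H →L[ℝ] ℝ} :
    IsLimitingNormal (svGraph (geMap f B C G)) (z, f z + B v) l ↔
      ∃ m, IsLimitingNormal (svGraph (restrictToRange C G)) (C z, v) m ∧
        m.comp (C.prodMap (.id ℝ V)) = l.comp ((ContinuousLinearMap.fst ℝ E V).prod
          ((fderiv ℝ f z).coprod B)) := by
  let Ψ : E × V → E × H := fun q => (q.1, f q.1 + B q.2)
  let Λ : E × H → E × V := fun q => (q.1, L (q.2 - f q.1))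
  have hΛΨ : Function.LeftInverse Λ Ψ := fun q => by simp [Λ, Ψ, hLB q.2]
  have hΨ : ContDiffAt ℝ 1 Ψ (z, v) :=
    contDiffAt_fst.prodMk ((hf.comp (z, v) contDiffAt_fst).add
      (B.contDiff.contDiffAt.comp _ contDiffAt_snd))
  have hΛ : ContDiffAt ℝ 1 Λ (Ψ (z, v)) :=
    contDiffAt_fst.prodMk (L.contDiff.contDiffAt.comp _
      (contDiffAt_snd.sub (hf.comp (Ψ (z, v)) contDiffAt_fst)))
  have hΨ' : fderiv ℝ Ψ (z, v) =
      (ContinuousLinearMap.fst ℝ E V).prod ((fderiv ℝ f z).coprod B) := by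
    have hfz := (hf.differentiableAt one_ne_zero).hasFDerivAt
    exact (hasFDerivAt_fst.prodMk ((hfz.comp (z, v) hasFDerivAt_fst).add
      (B.hasFDerivAt.comp (z, v) hasFDerivAt_snd))).fderiv
  have hrange : svGraph (restrictToRange C G) ⊆ range (C.prodMap (.id ℝ V)) := by
    rintro ⟨_, v⟩ ⟨⟨z, rfl⟩, -⟩
    exact ⟨(z, v), rfl⟩
  rw [svGraph_geMap_eq_image, ← hΨ']
  exact (isLimitingNormal_image_iff hΛΨ hΨ hΛ).trans <|
    isLimitingNormal_preimage_iff (P := P.prodMap (.id ℝ V))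
      (fun q => Prod.ext (hCP q.1) rfl) hrange

open ContinuousLinearMap in
theorem coDeriv_geMap {E H U V : Type*}
    [NormedAddCommGroup E] [InnerProductSpace ℝ E] [CompleteSpace E]
    [NormedAddCommGroup H] [InnerProductSpace ℝ H] [CompleteSpace H]
    [NormedAddCommGroup U] [InnerProductSpace ℝ U] [CompleteSpace U]
    [NormedAddCommGroup V] [InnerProductSpace ℝ V] [CompleteSpace V]
    {f : E → H} {B : V →L[ℝ] H} {C : E →L[ℝ] U} {G : U → Set V} {L : H →L[ℝ] V} {P : U →L[ℝ] E}
    (hLB : Function.LeftInverse L B) (hCP : ∀ x, C (P (C x)) = C x) {z : E} {v : V}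
    (hf : ContDiffAt ℝ 1 f z) (ξ : H) :
    coDeriv (geMap f B C G) z (f z + B v) ξ =
      (fun w => adjoint (fderiv ℝ f z) ξ + adjoint C w) ''
        coDeriv (restrictToRange C G) (C z) v (adjoint B ξ) := by
  ext w
  have hpull : ((innerSL ℝ w).coprod (innerSL ℝ (-ξ))).comp
      ((fst ℝ E V).prod ((fderiv ℝ f z).coprod B)) =
      (innerSL ℝ (w - adjoint (fderiv ℝ f z) ξ)).coprod (innerSL ℝ (-adjoint B ξ)) := by
    ext d <;> simp [adjoint_inner_left, sub_eq_add_neg]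
  have hrestrict : ∀ a b, ((innerSL ℝ a).coprod (innerSL ℝ b)).comp (C.prodMap (.id ℝ V)) =
      (innerSL ℝ (adjoint C a)).coprod (innerSL ℝ b) := fun a b => by
    ext d <;> simp [adjoint_inner_left]
  rw [mem_coDeriv_iff, isLimitingNormal_svGraph_geMap_iff hLB hCP hf, hpull]
  constructor
  · rintro ⟨m, hm, hml⟩
    obtain ⟨a, b, rfl⟩ := exists_eq_coprod_innerSL m
    rw [hrestrict, coprod_innerSL_inj] at hml
    obtain ⟨ha, rfl⟩ := hml
    exact ⟨a, mem_coDeriv_iff.2 hm, by simp [ha]⟩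
  · rintro ⟨a, ha, rfl⟩
    exact ⟨_, mem_coDeriv_iff.1 ha, by rw [hrestrict, add_sub_cancel_left]⟩

end ChainRule

section AubinCriterion

theorem exists_generalizedInverse_s17 {K E U : Type*} [DivisionRing K] [AddCommGroup E]
    [Module K E] [AddCommGroup U] [Module K U] (C : E →ₗ[K] U) :
    ∃ P : U →ₗ[K] E, ∀ x, C (P (C x)) = C x := by
  obtain ⟨g, hg⟩ := C.rangeRestrict.exists_rightInverse_of_surjective C.range_rangeRestrict
  obtain ⟨P, hP⟩ := g.exists_extend
  refine ⟨P, fun x => ?_⟩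
  have hPC : P (C x) = g (C.rangeRestrict x) := LinearMap.congr_fun hP (C.rangeRestrict x)
  rw [hPC]
  exact congrArg Subtype.val (LinearMap.congr_fun hg (C.rangeRestrict x))

open LinearMap in
theorem coDeriv_geMap_of_finiteDimensional {E H U V : Type*}
    [NormedAddCommGroup E] [InnerProductSpace ℝ E] [FiniteDimensional ℝ E]
    [NormedAddCommGroup H] [InnerProductSpace ℝ H] [FiniteDimensional ℝ H]
    [NormedAddCommGroup U] [InnerProductSpace ℝ U] [FiniteDimensional ℝ U]
    [NormedAddCommGroup V] [InnerProductSpace ℝ V] [FiniteDimensional ℝ V]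
    {f : E → H} {z : E} (hf : ContDiffAt ℝ 1 f z) {B : V →ₗ[ℝ] H} (hB : Function.Injective B)
    (C : E →ₗ[ℝ] U) (G : U → Set V) (v : V) (ξ : H) :
    coDeriv (geMap f B C G) z (f z + B v) ξ =
      (fun w => adjoint (fderiv ℝ f z : E →ₗ[ℝ] H) ξ + adjoint C w) ''
        coDeriv (restrictToRange C G) (C z) v (adjoint B ξ) := by
  have := FiniteDimensional.complete ℝ E
  have := FiniteDimensional.complete ℝ H
  have := FiniteDimensional.complete ℝ U
  have := FiniteDimensional.complete ℝ V
  obtain ⟨L, hL⟩ := B.exists_leftInverse_of_injective (ker_eq_bot.2 hB)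
  obtain ⟨P, hP⟩ := exists_generalizedInverse_s17 C
  exact coDeriv_geMap (B := B.toContinuousLinearMap) (C := C.toContinuousLinearMap)
    (L := L.toContinuousLinearMap) (P := P.toContinuousLinearMap) (LinearMap.congr_fun hL) hP hf ξ

open LinearMap in
theorem aubin_criterion_for_GE_general {E H U V : Type*}
    [NormedAddCommGroup E] [InnerProductSpace ℝ E] [FiniteDimensional ℝ E]
    [NormedAddCommGroup H] [InnerProductSpace ℝ H] [FiniteDimensional ℝ H]
    [NormedAddCommGroup U] [InnerProductSpace ℝ U] [FiniteDimensional ℝ U]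
    [NormedAddCommGroup V] [InnerProductSpace ℝ V] [FiniteDimensional ℝ V]
    {f : E → H} {z : E} (hf : ContDiffAt ℝ 1 f z) {B : V →ₗ[ℝ] H} (hB : Function.Injective B)
    (C : E →ₗ[ℝ] U) {G : U → Set V} {v : V} (hG : LocClosedAt (svGraph G) (C z, v)) :
    ((∃ κ, AubinWith κ (svInv (geMap f B C G)) (f z + B v) z) ↔
      ∀ ξ, 0 ∈ (fun w => adjoint (fderiv ℝ f z : E →ₗ[ℝ] H) ξ + adjoint C w) ''
        coDeriv (restrictToRange C G) (C z) v (adjoint B ξ) → ξ = 0) ∧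
    lipMod (svInv (geMap f B C G)) (f z + B v) z =
      ⨆ (ξ : H) (_ : ((fun w => adjoint (fderiv ℝ f z : E →ₗ[ℝ] H) ξ + adjoint C w) ''
        coDeriv (restrictToRange C G) (C z) v (adjoint B ξ) ∩ closedBall 0 1).Nonempty),
        (‖ξ‖₊ : ℝ≥0∞) := by
  obtain ⟨L, hL⟩ := B.exists_leftInverse_of_injective (ker_eq_bot.2 hB)
  have hLB : Function.LeftInverse L B := LinearMap.congr_fun hL
  have hfcont : ∀ᶠ x in 𝓝 z, ContinuousAt f x :=
    (hf.eventually (by simp)).mono fun _ hx => hx.continuousAt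
  have hcl : LocClosedAt (svGraph (geMap f B C G)) (z, f z + B v) :=
    locClosedAt_svGraph_geMap hLB L.continuous_of_finiteDimensional
      B.continuous_of_finiteDimensional C.continuous_of_finiteDimensional hfcont hG
  simp only [← coDeriv_geMap_of_finiteDimensional hf hB C G v]
  exact ⟨exists_aubinWith_svInv_iff hcl, lipMod_svInv_eq_iSup hcl⟩

theorem toEuclideanLin_nonsing_inv_mul_transpose_apply {m n : Type*} [Fintype m] [Fintype n]
    [DecidableEq m] [DecidableEq n] {B : Matrix m n ℝ}
    (hB : Function.Injective (Matrix.toEuclideanLin B)) (v : EuclideanSpace ℝ n) :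
    Matrix.toEuclideanLin ((B.transpose * B)⁻¹ * B.transpose) (Matrix.toEuclideanLin B v) = v := by
  have hinj : Function.Injective B.mulVec := fun x y hxy =>
    WithLp.toLp_injective 2 (hB (congrArg (WithLp.toLp 2) hxy))
  have hpd := Matrix.PosDef.conjTranspose_mul_self B hinj
  rw [Matrix.conjTranspose_eq_transpose_of_trivial] at hpd
  have hdet : IsUnit (B.transpose * B).det := (Matrix.isUnit_iff_isUnit_det _).1 hpd.isUnit
  simp [Matrix.toLpLin_apply, Matrix.mulVec_mulVec, Matrix.nonsing_inv_mul _ hdet]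

theorem toEuclideanLin_transpose_eq_adjoint {m n : Type*} [Fintype m] [Fintype n]
    [DecidableEq m] [DecidableEq n] (A : Matrix m n ℝ) :
    Matrix.toEuclideanLin A.transpose = LinearMap.adjoint (Matrix.toEuclideanLin A) := by
  rw [← Matrix.toEuclideanLin_conjTranspose_eq_adjoint,
    Matrix.conjTranspose_eq_transpose_of_trivial]

end AubinCriterion

/-- Aubin property criterion for the solution mapping of the generalized equation
`f(z) + B F(Cz) ∋ p`, together with the formula for the Lipschitz modulus. -/
theorem aubin_criterion_for_GE {n m : ℕ}
    (f : EuclideanSpace ℝ (Fin n) → EuclideanSpace ℝ (Fin n)) (hf : ContDiff ℝ 1 f)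
    (Fm : EuclideanSpace ℝ (Fin m) → Set (EuclideanSpace ℝ (Fin m)))
    (hFm : IsClosed (svGraph Fm))
    (B : Matrix (Fin n) (Fin m) ℝ) (hB : Function.Injective (Matrix.toEuclideanLin B))
    (C : Matrix (Fin m) (Fin n) ℝ)
    (Phi : EuclideanSpace ℝ (Fin n) → Set (EuclideanSpace ℝ (Fin n)))
    (hPhi : Phi = fun z =>
      {w | ∃ v ∈ Fm (Matrix.toEuclideanLin C z), w = f z + Matrix.toEuclideanLin B v})
    (FC : EuclideanSpace ℝ (Fin m) → Set (EuclideanSpace ℝ (Fin m)))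
    (hFC : FC = fun u => {v | (∃ z, Matrix.toEuclideanLin C z = u) ∧ v ∈ Fm u})
    (zbar pbar : EuclideanSpace ℝ (Fin n)) (hzp : pbar ∈ Phi zbar)
    (vbar : EuclideanSpace ℝ (Fin m))
    (hvbar : vbar = Matrix.toEuclideanLin ((B.transpose * B)⁻¹ * B.transpose) (pbar - f zbar)) :
    ((∃ κ : ℝ≥0, AubinWith κ (svInv Phi) pbar zbar) ↔
      ∀ ξ : EuclideanSpace ℝ (Fin n),
        (0 : EuclideanSpace ℝ (Fin n)) ∈
          (fun w => ContinuousLinearMap.adjoint (fderiv ℝ f zbar) ξ +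
              Matrix.toEuclideanLin C.transpose w) ''
            coDeriv FC (Matrix.toEuclideanLin C zbar) vbar
              (Matrix.toEuclideanLin B.transpose ξ) → ξ = 0) ∧
    lipMod (svInv Phi) pbar zbar =
      ⨆ (ξ : EuclideanSpace ℝ (Fin n))
        (_ : ((fun w => ContinuousLinearMap.adjoint (fderiv ℝ f zbar) ξ +
              Matrix.toEuclideanLin C.transpose w) ''
            coDeriv FC (Matrix.toEuclideanLin C zbar) vbar
              (Matrix.toEuclideanLin B.transpose ξ) ∩
            Metric.closedBall (0 : EuclideanSpace ℝ (Fin n)) 1).Nonempty),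
        (‖ξ‖₊ : ℝ≥0∞) := by
  subst hPhi hFC hvbar
  obtain ⟨v, -, rfl⟩ := hzp
  rw [add_sub_cancel_left, toEuclideanLin_nonsing_inv_mul_transpose_apply hB v,
    toEuclideanLin_transpose_eq_adjoint, toEuclideanLin_transpose_eq_adjoint]
  exact aubin_criterion_for_GE_general hf.contDiffAt hB _ (locClosedAt_of_isClosed hFm _)

end
end
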